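/- There is a constant c (independent of the game) such that every coordination game without bonuses on an unweighted closed chain of m cycles, each cycle having n nodes, admits, from every joint strategy, a finite c-improvement path of length at most c·n·m³ (hence ending in a strong equilibrium). -/

import Mathlib

open scoped Classical

namespace CG

/-- Payoff of node `i` in a coordination game on a weighted directed graph
with adjacency `adj` (an edge `j → i` is `adj j i`), edge weights `w`,
bonuses `β`, under the joint strategy `s`. -/
noncomputable def payoff {V M : Type} [Fintype V] (adj : V → V → Prop)
    (w : V → V → ℝ) (β : V → M → ℕ) (s : V → M) (i : V) : ℝ :=
  (∑ j ∈ Finset.univ.filter (fun j => adj j i ∧ s j = s i), w j i) + (β i (s i) : ℝ)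

/-- A joint strategy assigns to every node a colour from its colour set. -/
def Valid {V M : Type} (C : V → Finset M) (s : V → M) : Prop :=
  ∀ i, s i ∈ C i

/-- `s'` is a profitable deviation of the (non-empty) coalition
`K = {i | s i ≠ s' i}` from `s`. -/
def ProfDev {V M : Type} [Fintype V] (adj : V → V → Prop) (w : V → V → ℝ)
    (β : V → M → ℕ) (C : V → Finset M) (s s' : V → M) : Prop :=
  Valid C s' ∧ s ≠ s' ∧
    ∀ i, s i ≠ s' i → payoff adj w β s i < payoff adj w β s' i

/-- A profitable deviation of a single player. -/
def UniDev {V M : Type} [Fintype V] (adj : V → V → Prop) (w : V → V → ℝ)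
    (β : V → M → ℕ) (C : V → Finset M) (s s' : V → M) : Prop :=
  ProfDev adj w β C s s' ∧ ∃ i, ∀ j, j ≠ i → s j = s' j

/-- A Nash equilibrium: no single player has a profitable deviation. -/
def IsNash {V M : Type} [Fintype V] (adj : V → V → Prop) (w : V → V → ℝ)
    (β : V → M → ℕ) (C : V → Finset M) (s : V → M) : Prop :=
  Valid C s ∧ ∀ s', ¬ UniDev adj w β C s s'

/-- A strong equilibrium: no coalition has a profitable deviation. -/
def IsStrong {V M : Type} [Fintype V] (adj : V → V → Prop) (w : V → V → ℝ)
    (β : V → M → ℕ) (C : V → Finset M) (s : V → M) : Prop :=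
  Valid C s ∧ ∀ s', ¬ ProfDev adj w β C s s'

/-- There is a finite improvement path of length `L` starting at `s`
(each step a profitable single-player deviation) ending in a Nash equilibrium. -/
def ImpPath {V M : Type} [Fintype V] (adj : V → V → Prop) (w : V → V → ℝ)
    (β : V → M → ℕ) (C : V → Finset M) (s : V → M) (L : ℕ) : Prop :=
  ∃ σ : ℕ → V → M, σ 0 = s ∧
    (∀ t, t < L → UniDev adj w β C (σ t) (σ (t + 1))) ∧
    IsNash adj w β C (σ L)

/-- There is a finite c-improvement path of length `L` starting at `s`
(each step a profitable coalition deviation) ending in a strong equilibrium. -/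
def CImpPath {V M : Type} [Fintype V] (adj : V → V → Prop) (w : V → V → ℝ)
    (β : V → M → ℕ) (C : V → Finset M) (s : V → M) (L : ℕ) : Prop :=
  ∃ σ : ℕ → V → M, σ 0 = s ∧
    (∀ t, t < L → ProfDev adj w β C (σ t) (σ (t + 1))) ∧
    IsStrong adj w β C (σ L)

/-- Adjacency of the simple cycle `1 → 2 → ⋯ → n → 1` on `Fin n`. -/
def cycAdj (n : ℕ) : Fin n → Fin n → Prop :=
  fun i j => (i.val + 1) % n = j.val

/-- Adjacency of a chain of `m` cycles, each of `n` nodes: `node j i` is the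
`(i+1)`-st node of the `(j+1)`-st cycle (`0`-based indices). -/
def chainAdj {V : Type} (m n : ℕ) (node : ℕ → ℕ → V) : V → V → Prop :=
  fun u v => ∃ j i, j < m ∧ i < n ∧ u = node j i ∧ v = node j ((i + 1) % n)

/-- `node`, `k` describe an open chain of `m ≥ 2` simple cycles, each on `n ≥ 3`
nodes, where consecutive cycles `C_j, C_{j+1}` share exactly the node
`node j 0 = node (j+1) (k j)` (with `1 ≤ k j < n`) and the cycles are
otherwise pairwise disjoint, and every vertex lies on some cycle. -/
def IsOpenChain {V : Type} (m n : ℕ) (node : ℕ → ℕ → V) (k : ℕ → ℕ) : Prop :=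
  2 ≤ m ∧ 3 ≤ n ∧
  (∀ j, j + 1 < m → 1 ≤ k j ∧ k j < n) ∧
  (∀ j, j + 1 < m → node j 0 = node (j + 1) (k j)) ∧
  (∀ j i j' i', j < m → i < n → j' < m → i' < n → node j i = node j' i' →
      (j = j' ∧ i = i') ∨ (j' = j + 1 ∧ i = 0 ∧ i' = k j) ∨
      (j = j' + 1 ∧ i' = 0 ∧ i = k j')) ∧
  (∀ v : V, ∃ j i, j < m ∧ i < n ∧ node j i = v)

/-- As `IsOpenChain`, but additionally the last cycle shares exactly the node
`node (m-1) 0 = node 0 (k (m-1))` with the first one. -/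
def IsClosedChain {V : Type} (m n : ℕ) (node : ℕ → ℕ → V) (k : ℕ → ℕ) : Prop :=
  2 ≤ m ∧ 3 ≤ n ∧
  (∀ j, j < m → 1 ≤ k j ∧ k j < n) ∧
  (∀ j, j + 1 < m → node j 0 = node (j + 1) (k j)) ∧
  node (m - 1) 0 = node 0 (k (m - 1)) ∧
  (∀ j i j' i', j < m → i < n → j' < m → i' < n → node j i = node j' i' →
      (j = j' ∧ i = i') ∨ (j' = j + 1 ∧ i = 0 ∧ i' = k j) ∨
      (j = j' + 1 ∧ i' = 0 ∧ i = k j') ∨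
      (j = m - 1 ∧ j' = 0 ∧ i = 0 ∧ i' = k (m - 1)) ∨
      (j' = m - 1 ∧ j = 0 ∧ i' = 0 ∧ i = k (m - 1))) ∧
  (∀ v : V, ∃ j i, j < m ∧ i < n ∧ node j i = v)

/-!
The shared nodes of the chain are `m` hubs arranged in a ring, and consecutive hubs are joined by a
segment in each direction, whose inner nodes have a single in-neighbour. Once every inner node
follows its predecessor whenever it can, a switch of a hub needs at most `n` further steps to
travel along the segments that relay the new colour. So only the hubs matter, each of which has one
input from either neighbour.

All hubs become stable after `O(m ^ 3)` switches of single hubs: the hubs are stabilised one after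
the other, each new switch setting off a wave that travels backwards over hubs preferring their
forward input. A wave either dies out or leaves two adjacent hubs supporting each other, which never
switch again and so cut the ring open. Only switches that run around the whole ring have to be
treated separately.

From then on, a profitable deviation of a coalition can be restricted to the nodes that switch to
one colour `c`, and further so that the switching hubs support each other; `O(m ^ 2)` switches of
the remaining hubs restore stability. If some hub did not switch, a cycle that was not monochromatic
has become so, and a monochromatic cycle never changes again. If all hubs switched, then all hubs
are supported by an in-neighbour afterwards, and if they were so before, a strong equilibrium has
been reached. Hence `O(m)` such rounds suffice.
-/

section ReachWithin

variable {α : Type*} {r r' : α → α → Prop} {k l : ℕ} {x y z : α}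

/-- `ReachWithin r k x y`: the state `y` is reached from `x` by at most `k` steps of `r`. -/
inductive ReachWithin (r : α → α → Prop) : ℕ → α → α → Prop
  | refl (k : ℕ) (x : α) : ReachWithin r k x x
  | head {k : ℕ} {x y z : α} : r x y → ReachWithin r k y z → ReachWithin r (k + 1) x z

namespace ReachWithin

theorem mono (h : ReachWithin r k x y) (hr : ∀ u v, r u v → r' u v) (hkl : k ≤ l) :
    ReachWithin r' l x y := by
  induction h generalizing l with
  | refl => exact .refl _ _
  | head hxy _ ih =>
    obtain ⟨l, rfl⟩ := Nat.exists_eq_add_of_le' (Nat.le_of_add_left_le hkl)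
    exact .head (hr _ _ hxy) (ih (by omega))

theorem of_le (h : ReachWithin r k x y) (hkl : k ≤ l) : ReachWithin r l x y :=
  h.mono (fun _ _ => id) hkl

theorem trans (h : ReachWithin r k x y) (h' : ReachWithin r l y z) : ReachWithin r (k + l) x z := by
  induction h with
  | refl => exact h'.of_le (by omega)
  | head hxy _ ih => exact (ReachWithin.head hxy (ih h')).of_le (by omega)

theorem single (h : r x y) : ReachWithin r 1 x y := .head h (.refl 0 y)

theorem preserves {p : α → Prop} (h : ReachWithin r k x y) (hp : ∀ u v, r u v → p u → p v)
    (hx : p x) : p y := by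
  induction h with
  | refl => exact hx
  | head hxy _ ih => exact ih (hp _ _ hxy hx)

end ReachWithin

end ReachWithin

/-- The two directions in which a colour travels around a cyclically ordered family of hubs. -/
inductive Dir
  | fwd
  | bwd

namespace Dir

variable {m : ℕ}

/-- The hub whose colour reaches hub `t` when travelling in direction `d`. -/
def src : Dir → ZMod m → ZMod m
  | fwd, t => t - 1
  | bwd, t => t + 1

/-- The opposite direction. -/
def rev : Dir → Dir
  | fwd => bwd
  | bwd => fwd

@[simp]
theorem rev_rev (d : Dir) : d.rev.rev = d := by cases d <;> rfl

theorem neg_src (d : Dir) (t : ZMod m) : -d.src t = d.rev.src (-t) := by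
  cases d <;> simp only [src, rev] <;> ring

theorem exists_iff {p : Dir → Prop} : (∃ d, p d) ↔ p fwd ∨ p bwd :=
  ⟨fun ⟨d, h⟩ => by cases d <;> simp [h], fun h => h.elim (⟨_, ·⟩) (⟨_, ·⟩)⟩

theorem forall_iff {p : Dir → Prop} : (∀ d, p d) ↔ p fwd ∧ p bwd :=
  ⟨fun h => ⟨h fwd, h bwd⟩, fun h d => by cases d <;> simp [h]⟩

theorem src_ne (hm : 2 ≤ m) (d : Dir) (t : ZMod m) : d.src t ≠ t := by
  have : Fact (1 < m) := ⟨hm⟩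
  cases d <;> simp [src]

end Dir

/-- A ring of hubs indexed by `ZMod m`: `colours t` are the colours available to hub `t`, and
`relays d t` those which the segment entering hub `t` in direction `d` passes on to it. -/
structure HubSystem (m : ℕ) (M : Type*) where
  colours : ZMod m → Set M
  relays : Dir → ZMod m → Set M

/-- A state of a ring of hubs: the colour of every hub `t`, and for each direction `d` the colour
`input d t` last delivered to it by the segment entering it in direction `d`. -/
@[ext]
structure HubState (m : ℕ) (M : Type*) where
  colour : ZMod m → M
  input : Dir → ZMod m → M

namespace HubSystem

section Basic

variable {m : ℕ} {M : Type*} {G : HubSystem m M} {X X' Z : HubState m M} {A B Y : Set (ZMod m)}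
  {c : M} {d : Dir} {t p : ZMod m} {k l : ℕ}

/-- The state obtained when all hubs of `Y` adopt the colour `c`, which then spreads along every
segment leaving `Y` that relays it. -/
noncomputable def push (G : HubSystem m M) (X : HubState m M) (Y : Set (ZMod m)) (c : M) :
    HubState m M where
  colour t := if t ∈ Y then c else X.colour t
  input d t := if d.src t ∈ Y ∧ c ∈ G.relays d t then c else X.input d t

/-- Hub `t` may profitably switch to `c`: it agrees with neither input, and `c` is an input. -/
def CanFire (G : HubSystem m M) (X : HubState m M) (t : ZMod m) (c : M) : Prop :=
  c ∈ G.colours t ∧ (∀ d, X.colour t ≠ X.input d t) ∧ ∃ d, c = X.input d t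

/-- A single hub of `A` profitably switches its colour. -/
def Fires (G : HubSystem m M) (A : Set (ZMod m)) (X Z : HubState m M) : Prop :=
  ∃ t ∈ A, ∃ c, G.CanFire X t c ∧ Z = G.push X {t} c

/-- `Z` is reached from `X` by at most `k` profitable switches of single hubs of `A`. -/
abbrev Reach (G : HubSystem m M) (A : Set (ZMod m)) : ℕ → HubState m M → HubState m M → Prop :=
  ReachWithin (G.Fires A)

/-- Every hub has an available colour. -/
def Admissible (G : HubSystem m M) (X : HubState m M) : Prop := ∀ t, X.colour t ∈ G.colours t

/-- Hub `t` has no profitable switch. -/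
def Stable (G : HubSystem m M) (X : HubState m M) (t : ZMod m) : Prop :=
  (∃ d, X.colour t = X.input d t) ∨ ∀ d, X.input d t ∉ G.colours t

/-- Hub `t` follows its forward input whenever that colour is available. -/
def LeftBiased (G : HubSystem m M) (X : HubState m M) (t : ZMod m) : Prop :=
  X.colour t = X.input .fwd t ∨ X.input .fwd t ∉ G.colours t

/-- Hub `t` is stable and prefers its forward input. -/
def LeftStable (G : HubSystem m M) (X : HubState m M) (t : ZMod m) : Prop :=
  G.Stable X t ∧ G.LeftBiased X t

/-- The adjacent hubs `p` and `p + 1` support each other, and hence never switch again. -/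
def Locked (X : HubState m M) (p : ZMod m) : Prop :=
  X.colour p = X.colour (p + 1) ∧ X.input .bwd p = X.colour p ∧ X.input .fwd (p + 1) = X.colour p

theorem not_stable_iff : ¬G.Stable X t ↔ ∃ d, G.CanFire X t (X.input d t) := by
  simp only [Stable, CanFire]
  push Not
  exact ⟨fun ⟨h, d, hd⟩ => ⟨d, hd, h, d, rfl⟩, fun ⟨d, hd, h, _⟩ => ⟨h, d, hd⟩⟩

theorem Stable.congr (h : G.Stable X t) (hc : Z.colour t = X.colour t)
    (hi : ∀ d, Z.input d t = X.input d t) : G.Stable Z t := by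
  simpa only [Stable, hc, hi] using h

theorem LeftBiased.congr (h : G.LeftBiased X t) (hc : Z.colour t = X.colour t)
    (hi : Z.input .fwd t = X.input .fwd t) : G.LeftBiased Z t := by
  simpa only [LeftBiased, hc, hi] using h

theorem push_colour_mem (ht : t ∈ Y) : (G.push X Y c).colour t = c := if_pos ht

theorem push_colour_notMem (ht : t ∉ Y) : (G.push X Y c).colour t = X.colour t := if_neg ht

theorem push_input_notMem (ht : d.src t ∉ Y) : (G.push X Y c).input d t = X.input d t :=
  if_neg fun h => ht h.1

theorem push_input_eq_or :
    (G.push X Y c).input d t = X.input d t ∨ d.src t ∈ Y ∧ (G.push X Y c).input d t = c := by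
  by_cases h : d.src t ∈ Y ∧ c ∈ G.relays d t
  · exact .inr ⟨h.1, if_pos h⟩
  · exact .inl (if_neg h)

theorem push_colour_self : (G.push X {t} c).colour t = c := push_colour_mem rfl

theorem push_input_self (hm : 2 ≤ m) : (G.push X {t} c).input d t = X.input d t :=
  push_input_notMem (d.src_ne hm t)

theorem Stable.push_or (h : G.Stable X t) (ht : t ∉ Y) :
    G.Stable (G.push X Y c) t ∨ ∃ d, d.src t ∈ Y ∧ (G.push X Y c).input d t = c := by
  by_contra! hcon
  exact hcon.1 (h.congr (push_colour_notMem ht) fun d =>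
    push_input_eq_or.resolve_right fun h' => hcon.2 d h'.1 h'.2)

theorem CanFire.stable_push (hm : 2 ≤ m) (h : G.CanFire X t c) : G.Stable (G.push X {t} c) t := by
  obtain ⟨-, -, d, hd⟩ := h
  refine .inl ⟨d, ?_⟩
  rw [push_colour_self, push_input_self hm, hd]

theorem Fires.colour_eq (h : G.Fires A X Z) (ht : t ∉ A) : Z.colour t = X.colour t := by
  obtain ⟨u, hu, c, -, rfl⟩ := h
  exact push_colour_notMem fun h => ht (h ▸ hu)

theorem Fires.input_eq (h : G.Fires A X Z) (ht : d.src t ∉ A) : Z.input d t = X.input d t := by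
  obtain ⟨u, hu, c, -, rfl⟩ := h
  exact push_input_notMem fun h => ht (h ▸ hu)

theorem CanFire.reach (h : G.CanFire X t c) (ht : t ∈ A) : G.Reach A 1 X (G.push X {t} c) :=
  .single ⟨t, ht, c, h, rfl⟩

namespace Reach

theorem mono (h : G.Reach A k X Z) (hA : A ⊆ B) (hk : k ≤ l) : G.Reach B l X Z :=
  ReachWithin.mono h (fun _ _ ⟨t, ht, h⟩ => ⟨t, hA ht, h⟩) hk

theorem colour_eq (h : G.Reach A k X Z) (ht : t ∉ A) : Z.colour t = X.colour t :=
  h.preserves (p := fun W => W.colour t = X.colour t)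
    (fun _ _ h h' => (h.colour_eq ht).trans h') rfl

theorem input_eq (h : G.Reach A k X Z) (ht : d.src t ∉ A) : Z.input d t = X.input d t :=
  h.preserves (p := fun W => W.input d t = X.input d t)
    (fun _ _ h h' => (h.input_eq ht).trans h') rfl

theorem input_eq_or_mem (h : G.Reach A k X Z) (d : Dir) (t : ZMod m) :
    Z.input d t = X.input d t ∨ Z.input d t ∈ G.colours (d.src t) := by
  refine h.preserves (p := fun W => W.input d t = X.input d t ∨ W.input d t ∈ G.colours (d.src t))
    ?_ (.inl rfl)
  rintro U _ ⟨u, -, c, hc, rfl⟩ hU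
  rcases push_input_eq_or (G := G) (X := U) (Y := {u}) (c := c) (d := d) (t := t) with h | ⟨ht, h⟩
  · rwa [h]
  · exact .inr (by rw [h, Set.mem_singleton_iff.1 ht]; exact hc.1)

theorem input_mem (h : G.Reach A k X Z) (hd : X.input d t ∈ G.colours (d.src t)) :
    Z.input d t ∈ G.colours (d.src t) :=
  (h.input_eq_or_mem d t).elim (fun h' => h' ▸ hd) id

theorem admissible (h : G.Reach A k X Z) (hX : G.Admissible X) : G.Admissible Z := by
  refine h.preserves ?_ hX
  rintro U _ ⟨u, -, c, hc, rfl⟩ hU t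
  by_cases ht : t ∈ ({u} : Set _)
  · rw [push_colour_mem ht, Set.mem_singleton_iff.1 ht]
    exact hc.1
  · rw [push_colour_notMem ht]
    exact hU t

theorem stable (h : G.Reach A k X Z) (hX : G.Stable X t) (ht : t ∉ A)
    (hsrc : ∀ d : Dir, d.src t ∉ A) : G.Stable Z t :=
  hX.congr (h.colour_eq ht) fun d => h.input_eq (hsrc d)

theorem locked (h : G.Reach A k X Z) (hX : Locked X p) : Locked Z p := by
  refine h.preserves (p := (Locked · p)) ?_ hX
  rintro U _ ⟨u, -, c, ⟨-, hc, -⟩, rfl⟩ ⟨hcol, hbwd, hfwd⟩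
  have hp : p ∉ ({u} : Set _) := by rintro rfl; exact hc .bwd hbwd.symm
  have hp' : p + 1 ∉ ({u} : Set _) := by rintro rfl; exact hc .fwd (hcol.symm.trans hfwd.symm)
  have hsrc : Dir.fwd.src (p + 1) = p := add_sub_cancel_right p 1
  refine ⟨?_, ?_, ?_⟩
  · rwa [push_colour_notMem hp, push_colour_notMem hp']
  · rwa [push_colour_notMem hp, push_input_notMem hp']
  · rwa [push_colour_notMem hp, push_input_notMem (by rwa [hsrc])]

end Reach

end Basic

end HubSystem

section Arc

variable {m : ℕ} {a : ZMod m} {i j q e : ℕ}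

/-- The `i`-th hub after `a`. -/
def site (a : ZMod m) (i : ℕ) : ZMod m := a + i

/-- The arc consisting of the `q` hubs that follow `a`. -/
def arc (a : ZMod m) (q : ℕ) : Set (ZMod m) := {x | ∃ i, 1 ≤ i ∧ i ≤ q ∧ x = site a i}

@[simp]
theorem site_zero (a : ZMod m) : site a 0 = a := by simp [site]

@[simp]
theorem site_self (a : ZMod m) : site a m = a := by simp [site]

theorem site_add (a : ZMod m) (i j : ℕ) : site a (i + j) = site (site a i) j := by
  simp [site, add_assoc]

@[simp]
theorem src_fwd_site_succ (a : ZMod m) (i : ℕ) : Dir.fwd.src (site a (i + 1)) = site a i := by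
  simp [site, Dir.src, ← add_assoc]

@[simp]
theorem src_bwd_site (a : ZMod m) (i : ℕ) : Dir.bwd.src (site a i) = site a (i + 1) := by
  simp [site, Dir.src, add_assoc]

theorem neg_site_neg_site (a : ZMod m) (h : i ≤ j) : -site (-site a j) i = site a (j - i) := by
  simp [site, Nat.cast_sub h]
  ring

theorem site_inj (hij : i < j + m) (hji : j < i + m) : site a i = site a j ↔ i = j := by
  refine ⟨fun h => ?_, fun h => h ▸ rfl⟩
  rw [site, site, add_right_inj, ← Int.cast_natCast, ← Int.cast_natCast (n := j),
    ZMod.intCast_eq_intCast_iff_dvd_sub] at h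
  have := Int.eq_zero_of_abs_lt_dvd h (abs_lt.2 ⟨by omega, by omega⟩)
  omega

theorem exists_site (hm : 0 < m) (a x : ZMod m) : ∃ i, 1 ≤ i ∧ i ≤ m ∧ x = site a i := by
  have : NeZero m := ⟨hm.ne'⟩
  rcases Nat.eq_zero_or_pos (x - a).val with h | h
  · refine ⟨m, hm, le_rfl, ?_⟩
    rw [site_self, sub_eq_zero.1 ((ZMod.val_eq_zero _).1 h)]
  · exact ⟨(x - a).val, h, (ZMod.val_lt _).le, by simp [site]⟩

theorem ncard_zmod_le (hm : 0 < m) (S : Set (ZMod m)) : S.ncard ≤ m := by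
  have : NeZero m := ⟨hm.ne'⟩
  simpa using Set.ncard_le_ncard (Set.subset_univ S)

theorem site_mem (hi : 1 ≤ i) (hiq : i ≤ q) : site a i ∈ arc a q := ⟨i, hi, hiq, rfl⟩

theorem site_mem_arc (hq : q < m) (hi : 1 ≤ i) (him : i ≤ m) : site a i ∈ arc a q ↔ i ≤ q := by
  refine ⟨fun ⟨j, hj, hjq, h⟩ => ?_, fun h => ⟨i, hi, h, rfl⟩⟩
  rwa [(site_inj (by omega) (by omega)).1 h]

theorem site_notMem_arc (hq : q < i) (hi : i ≤ m) : site a i ∉ arc a q := by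
  rw [site_mem_arc (by omega) (by omega) hi]
  omega

theorem src_fwd_notMem_arc (hq : q + 1 < i) (hi : i ≤ m) : Dir.fwd.src (site a i) ∉ arc a q := by
  obtain ⟨i, rfl⟩ := Nat.exists_eq_add_of_le' (by omega : 1 ≤ i)
  rw [src_fwd_site_succ]
  exact site_notMem_arc (by omega) (by omega)

theorem src_bwd_notMem_arc (hq : q ≤ i) (hi : i < m) : Dir.bwd.src (site a i) ∉ arc a q := by
  rw [src_bwd_site]
  exact site_notMem_arc (by omega) hi

theorem arc_mono (h : q ≤ e) : arc a q ⊆ arc a e :=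
  fun _ ⟨i, hi, hiq, hx⟩ => ⟨i, hi, hiq.trans h, hx⟩

theorem arc_site_subset (h : i + q ≤ e) : arc (site a i) q ⊆ arc a e :=
  fun _ ⟨j, hj, hjq, hx⟩ => ⟨i + j, by omega, by omega, by rw [hx, site_add]⟩

theorem neg_preimage_arc_subset (a : ZMod m) (e : ℕ) :
    Neg.neg ⁻¹' arc (-site a (e + 1)) e ⊆ arc a e := fun x ⟨i, hi, hie, hx⟩ =>
  ⟨e + 1 - i, by omega, by omega, by rw [← neg_site_neg_site a (by omega), ← hx, neg_neg]⟩

theorem arc_compl_nonempty (hq : q < m) : (arc a q)ᶜ.Nonempty :=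
  ⟨a, by simpa using (site_mem_arc (a := a) hq (by omega) le_rfl).not.2 (by omega)⟩

theorem src_eq_of_src_mem_arc (he : e < m) {d : Dir} {t : ZMod m} (ht : t ∉ arc a e)
    (hsrc : d.src t ∈ arc a e) : d.src t = site a 1 ∨ d.src t = site a e := by
  obtain ⟨i, hi, him, rfl⟩ := exists_site (by omega) a t
  rw [site_mem_arc he hi him, not_le] at ht
  cases d with
  | fwd =>
    obtain ⟨i, rfl⟩ := Nat.exists_eq_add_of_le' hi
    rw [src_fwd_site_succ] at hsrc ⊢
    have hle : ¬e < i := fun h => site_notMem_arc h (by omega) hsrc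
    exact .inr (by rw [(by omega : i = e)])
  | bwd =>
    rcases him.lt_or_eq with hlt | rfl
    · exact absurd hsrc (src_bwd_notMem_arc ht.le hlt)
    · exact .inl (by rw [src_bwd_site, site_add, site_self])

/-- The arc runs from the first to the last element outside `S`, seen from an element of `S`. -/
theorem exists_arc_compl_subset (hm : 0 < m) {S : Set (ZMod m)} (hne : S.Nonempty)
    (hne' : Sᶜ.Nonempty) :
    ∃ a e, 1 ≤ e ∧ e < m ∧ (arc a e)ᶜ ⊆ S ∧ site a 1 ∉ S ∧ site a e ∉ S := by
  obtain ⟨t, ht⟩ := hne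
  obtain ⟨u, hu⟩ := hne'
  obtain ⟨j, hj, hjm, rfl⟩ := exists_site hm t u
  let I := {i ∈ Finset.Icc 1 m | site t i ∉ S}
  have hI : I.Nonempty := ⟨j, by simpa [I, hj, hjm] using hu⟩
  have hmem : ∀ {i}, i ∈ I ↔ (1 ≤ i ∧ i ≤ m) ∧ site t i ∉ S := by simp [I]
  have hfirst := hmem.1 (I.min'_mem hI)
  have hlast := hmem.1 (I.max'_mem hI)
  have hle := I.min'_le_max' hI
  obtain ⟨p, hp⟩ := Nat.exists_eq_add_of_le' hfirst.1.1
  have hlt : I.max' hI < m := hlast.1.2.lt_of_ne fun h => hlast.2 (by rwa [h, site_self])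
  refine ⟨site t p, I.max' hI - p, by omega, by omega, fun x hx => ?_, ?_, ?_⟩
  · obtain ⟨i, hi, him, rfl⟩ := exists_site hm t x
    by_contra hx'
    have hiI : i ∈ I := hmem.2 ⟨⟨hi, him⟩, hx'⟩
    have := I.min'_le i hiI
    have := I.le_max' i hiI
    exact hx ⟨i - p, by omega, by omega, by rw [← site_add, Nat.add_sub_cancel' (by omega)]⟩
  · rw [← site_add, ← hp]
    exact hfirst.2
  · rw [← site_add, Nat.add_sub_cancel' (by omega)]
    exact hlast.2

/-- The first hub after the arc to select its predecessor is selected by it in return. -/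
theorem exists_mutual (he : 1 ≤ e) (hem : e < m) {p : Dir → ZMod m → Prop}
    (h : ∀ t ∉ arc a e, ∃ d, p d t) (hclosed : ∀ t ∉ arc a e, ∀ d, p d t → d.src t ∉ arc a e) :
    ∃ t, t - 1 ∉ arc a e ∧ t ∉ arc a e ∧ p .fwd t ∧ p .bwd (t - 1) := by
  have hfwd : ∃ i, e < i ∧ i ≤ m ∧ p .fwd (site a i) := by
    have hnot : site a m ∉ arc a e := site_notMem_arc hem le_rfl
    refine ⟨m, hem, le_rfl, (Dir.exists_iff.1 (h _ hnot)).resolve_right fun hb => ?_⟩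
    refine hclosed _ hnot _ hb ?_
    rw [src_bwd_site, site_add, site_self]
    exact site_mem le_rfl he
  obtain ⟨hi, him, hp⟩ := Nat.find_spec hfwd
  have hmin := fun j => Nat.find_min (m := j) hfwd
  generalize Nat.find hfwd = i at hi him hp hmin
  obtain ⟨i, rfl⟩ := Nat.exists_eq_add_of_le' (by omega : 1 ≤ i)
  have hsrc : site a (i + 1) - 1 = site a i := src_fwd_site_succ a i
  have hnot := site_notMem_arc (a := a) hi him
  have hprev : site a i ∉ arc a e := hsrc ▸ hclosed _ hnot _ hp
  have hei : e < i := by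
    by_contra hle
    exact hprev (site_mem (by omega) (by omega))
  refine ⟨site a (i + 1), hsrc ▸ hprev, hnot, hp, hsrc ▸ ?_⟩
  exact (Dir.exists_iff.1 (h _ hprev)).resolve_left fun hf =>
    hmin i i.lt_succ_self ⟨hei, by omega, hf⟩

end Arc

namespace HubSystem

section Sweep

variable {m : ℕ} {M : Type*} {G : HubSystem m M} {X : HubState m M} {a : ZMod m}
  {b c : M} {e f i j : ℕ}

theorem push_site_colour (h : i ≠ j) (hij : i < j + m) (hji : j < i + m) :
    (G.push X {site a j} c).colour (site a i) = X.colour (site a i) :=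
  push_colour_notMem (mt (site_inj hij hji).1 h)

theorem push_site_fwd (h : i ≠ j) (hij : i < j + m) (hji : j < i + m) :
    (G.push X {site a j} c).input .fwd (site a (i + 1)) = X.input .fwd (site a (i + 1)) :=
  push_input_notMem (by rw [src_fwd_site_succ]; exact mt (site_inj hij hji).1 h)

theorem push_site_bwd (h : i + 1 ≠ j) (hij : i + 1 < j + m) (hji : j < i + 1 + m) :
    (G.push X {site a j} c).input .bwd (site a i) = X.input .bwd (site a i) :=
  push_input_notMem (by rw [src_bwd_site]; exact mt (site_inj hij hji).1 h)

theorem Stable.push_site (h : G.Stable X (site a i)) (hi : 1 ≤ i) (him : i < m) (hj : 1 ≤ j)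
    (hjm : j < m) (hne : i ≠ j) :
    G.Stable (G.push X {site a j} c) (site a i) ∨
      i = j + 1 ∧ (G.push X {site a j} c).input .fwd (site a i) = c ∨
      i + 1 = j ∧ (G.push X {site a j} c).input .bwd (site a i) = c := by
  have hnot : site a i ∉ ({site a j} : Set _) := mt (site_inj (by omega) (by omega)).1 hne
  refine (h.push_or hnot).imp_right ?_
  obtain ⟨i, rfl⟩ := Nat.exists_eq_add_of_le' hi
  rintro ⟨_ | _, hsrc, hc⟩
  · rw [src_fwd_site_succ, Set.mem_singleton_iff] at hsrc
    have hij := (site_inj (by omega) (by omega)).1 hsrc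
    exact .inl ⟨by rw [hij], hc⟩
  · rw [src_bwd_site, Set.mem_singleton_iff] at hsrc
    exact .inr ⟨(site_inj (by omega) (by omega)).1 hsrc, hc⟩

theorem locked_push_site (hm : 2 ≤ m) (hcol : X.colour (site a (j + 1)) = c)
    (hbwd : X.input .bwd (site a j) = c)
    (hfwd : (G.push X {site a j} c).input .fwd (site a (j + 1)) = c) :
    Locked (G.push X {site a j} c) (site a j) := by
  have hsucc : site a j + 1 = site a (j + 1) := src_bwd_site a j
  have hj : (G.push X {site a j} c).colour (site a j) = c := push_colour_self
  refine ⟨?_, ?_, ?_⟩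
  · rw [hj, hsucc, push_site_colour (by omega) (by omega) (by omega), hcol]
  · rw [hj, push_site_bwd (by omega) (by omega) (by omega), hbwd]
  · rw [hj, hsucc, hfwd]

/-- A wave travelling backwards through the arc of the `f` hubs after `a`, all of which prefer
their forward inputs: hub `j + 1` has just changed to `b`, so that only hub `j` may be unstable. -/
structure Wave (G : HubSystem m M) (X : HubState m M) (a : ZMod m) (f : ℕ) (b : M) (j : ℕ) :
    Prop where
  lt : j < f
  leftBiased : ∀ i, 1 ≤ i → i ≤ f → G.LeftBiased X (site a i)
  stable : ∀ i, 1 ≤ i → i ≤ f → i ≠ j → G.Stable X (site a i)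
  pending : 0 < j → G.Stable X (site a j) ∨ X.input .bwd (site a j) = b
  colour_eq : X.colour (site a (j + 1)) = b

namespace Wave

theorem canFire (h : G.Wave X a f b (j + 1)) (hs : ¬G.Stable X (site a (j + 1))) :
    G.CanFire X (site a (j + 1)) b := by
  obtain ⟨d, hd⟩ := not_stable_iff.1 hs
  cases d with
  | fwd => exact absurd hd.1 ((h.leftBiased _ (by omega) h.lt.le).resolve_left (hd.2.1 .fwd))
  | bwd => rwa [(h.pending (by omega)).resolve_left hs] at hd

theorem push (hf : f < m) (h : G.Wave X a f b (j + 1)) (hs : ¬G.Stable X (site a (j + 1))) :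
    G.Wave (G.push X {site a (j + 1)} b) a f b j := by
  have hj := h.lt
  have hfire := h.canFire hs
  refine ⟨by omega, fun i h1 h2 => ?_, fun i h1 h2 hne => ?_, fun hj0 => ?_, push_colour_self⟩
  · rcases eq_or_ne i (j + 1) with rfl | hne
    · refine .inr ?_
      rw [push_site_fwd (by omega) (by omega) (by omega)]
      exact (h.leftBiased _ h1 h2).resolve_left (hfire.2.1 .fwd)
    have hcol := push_site_colour (G := G) (X := X) (a := a) (c := b) hne (by omega) (by omega)
    rcases push_input_eq_or (G := G) (X := X) (Y := {site a (j + 1)}) (c := b) (d := .fwd)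
      (t := site a i) with hsame | ⟨hsrc, hb⟩
    · exact (h.leftBiased i h1 h2).congr hcol hsame
    · obtain ⟨i, rfl⟩ := Nat.exists_eq_add_of_le' h1
      rw [src_fwd_site_succ] at hsrc
      obtain rfl := (site_inj (by omega) (by omega)).1 hsrc
      exact .inl (by rw [hcol, h.colour_eq, hb])
  · rcases eq_or_ne i (j + 1) with rfl | hne'
    · exact hfire.stable_push (by omega)
    refine ((h.stable i h1 h2 hne').push_site h1 (by omega) (by omega) (by omega) hne').elim id ?_
    rintro (⟨rfl, hb⟩ | ⟨hij, -⟩)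
    · exact .inl ⟨.fwd, by
        rw [push_site_colour hne' (by omega) (by omega), h.colour_eq, hb]⟩
    · omega
  · refine ((h.stable j hj0 (by omega) (by omega)).push_site hj0 (by omega) (by omega) (by omega)
      (by omega)).imp_right ?_
    rintro (⟨hij, -⟩ | ⟨-, hb⟩)
    exacts [by omega, hb]

theorem exists_reach (hf : f < m) (h : G.Wave X a f b j) :
    ∃ Z, G.Reach (arc a j) j X Z ∧ (∀ i, 1 ≤ i → i ≤ f → G.LeftStable Z (site a i)) ∧
      ((∃ p, Locked Z p) ∨
        ∀ i, 1 ≤ i → i ≤ f → Z.input .fwd (site a i) = X.input .fwd (site a i)) := by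
  induction j generalizing X with
  | zero => exact ⟨X, .refl _ _, fun i h1 h2 => ⟨h.stable i h1 h2 (by omega), h.leftBiased i h1 h2⟩,
      .inr fun _ _ _ => rfl⟩
  | succ j ih =>
    have hj := h.lt
    by_cases hs : G.Stable X (site a (j + 1))
    · refine ⟨X, .refl _ _, fun i h1 h2 => ⟨?_, h.leftBiased i h1 h2⟩, .inr fun _ _ _ => rfl⟩
      rcases eq_or_ne i (j + 1) with rfl | hne
      exacts [hs, h.stable i h1 h2 hne]
    obtain ⟨Z, hZ, hstab, hfwd⟩ := ih (h.push hf hs)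
    refine ⟨Z, ?_, hstab, ?_⟩
    · have hfire := (h.canFire hs).reach (site_mem (q := j + 1) (by omega) le_rfl)
      exact (hfire.trans (hZ.mono (arc_mono (by omega)) le_rfl)).of_le (by omega)
    rcases push_input_eq_or (G := G) (X := X) (Y := {site a (j + 1)}) (c := b) (d := .fwd)
      (t := site a (j + 2)) with hsame | ⟨-, hb⟩
    · refine hfwd.imp_right fun hfwd i h1 h2 => (hfwd i h1 h2).trans ?_
      obtain ⟨i, rfl⟩ := Nat.exists_eq_add_of_le' h1
      rcases eq_or_ne i (j + 1) with rfl | hne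
      exacts [hsame, push_site_fwd hne (by omega) (by omega)]
    · exact .inl ⟨_, hZ.locked <| locked_push_site (by omega) h.colour_eq
        ((h.pending (by omega)).resolve_left hs) hb⟩

end Wave

theorem Wave.of_canFire (hf : f < m) (hj : f = j + 1)
    (hleft : ∀ i, 1 ≤ i → i < f → G.LeftStable X (site a i)) (hc : G.CanFire X (site a f) c)
    (hpref : c = X.input .fwd (site a f) ∨ X.input .fwd (site a f) ∉ G.colours (site a f)) :
    G.Wave (G.push X {site a f} c) a f c j := by
  have hcol : (G.push X {site a f} c).colour (site a f) = c := push_colour_self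
  refine ⟨by omega, fun i h1 h2 => ?_, fun i h1 h2 hne => ?_, fun hj0 => ?_, by rwa [← hj]⟩
  · have hfwd : (G.push X {site a f} c).input .fwd (site a i) = X.input .fwd (site a i) := by
      obtain ⟨i, rfl⟩ := Nat.exists_eq_add_of_le' h1
      exact push_site_fwd (by omega) (by omega) (by omega)
    rcases h2.eq_or_lt with rfl | hlt
    · rwa [LeftBiased, hcol, hfwd]
    · exact (hleft i h1 hlt).2.congr (push_site_colour hlt.ne (by omega) (by omega)) hfwd
  · rcases h2.eq_or_lt with rfl | hlt
    · exact hc.stable_push (by omega)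
    refine ((hleft i h1 hlt).1.push_site h1 (by omega) (by omega) hf hlt.ne).elim id ?_
    rintro (⟨hij, -⟩ | ⟨hij, -⟩) <;> omega
  · refine ((hleft j hj0 (by omega)).1.push_site hj0 (by omega) (by omega) hf
      (by omega)).imp_right ?_
    rintro (⟨hij, -⟩ | ⟨-, hb⟩)
    exacts [by omega, hb]

theorem exists_canFire_preferring_fwd {t : ZMod m} (hs : ¬G.Stable X t) :
    ∃ c, G.CanFire X t c ∧ (c = X.input .fwd t ∨ X.input .fwd t ∉ G.colours t) := by
  obtain ⟨d, hd⟩ := not_stable_iff.1 hs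
  by_cases h : X.input .fwd t ∈ G.colours t
  · exact ⟨_, ⟨h, hd.2.1, .fwd, rfl⟩, .inl rfl⟩
  · exact ⟨_, hd, .inr h⟩

/-- Hub `f` switches, preferably to its forward input, and the backward wave it sets off dies out
or leaves a locked pair. -/
theorem exists_extend_leftStable (h1 : 1 ≤ f) (hf : f < m)
    (hleft : ∀ i, 1 ≤ i → i < f → G.LeftStable X (site a i)) (hs : ¬G.Stable X (site a f)) :
    ∃ Z, G.Reach (arc a f) f X Z ∧ (∀ i, 1 ≤ i → i ≤ f → G.LeftStable Z (site a i)) ∧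
      ((∃ p, Locked Z p) ∨
        ∀ i, 1 ≤ i → i ≤ f → Z.input .fwd (site a i) = X.input .fwd (site a i)) ∧
      (Z.input .fwd (site a (f + 1)) = X.input .fwd (site a (f + 1)) ∨
        Z.input .fwd (site a (f + 1)) = Z.colour (site a f)) := by
  obtain ⟨j, rfl⟩ := Nat.exists_eq_add_of_le' h1
  obtain ⟨c, hc, hpref⟩ := exists_canFire_preferring_fwd hs
  obtain ⟨Z, hZ, hstab, hfwd⟩ := (Wave.of_canFire hf rfl hleft hc hpref).exists_reach hf
  have hfire := hc.reach (site_mem (q := j + 1) h1 le_rfl)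
  have hnot : site a (j + 1) ∉ arc a j := site_notMem_arc (by omega) hf.le
  refine ⟨Z, (hfire.trans (hZ.mono (arc_mono (by omega)) le_rfl)).of_le (by omega), hstab,
    hfwd.imp_right fun h i hi hif => (h i hi hif).trans ?_, ?_⟩
  · rw [hZ.input_eq (by rwa [src_fwd_site_succ]), hZ.colour_eq hnot, push_colour_self]
    exact push_input_eq_or.imp_right And.right
  · obtain ⟨i, rfl⟩ := Nat.exists_eq_add_of_le' hi
    exact push_site_fwd (by omega) (by omega) (by omega)

theorem exists_stable_arc_of_leftStable (he : e < m) (d : ℕ) (h1 : 1 ≤ f) (hfd : f + d = e + 1)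
    (hleft : ∀ i, 1 ≤ i → i < f → G.LeftStable X (site a i))
    (hstab : ∀ i, f < i → i ≤ e → G.Stable X (site a i)) :
    ∃ Z, G.Reach (arc a e) (m * d) X Z ∧ ∀ i, 1 ≤ i → i ≤ e → G.Stable Z (site a i) := by
  induction d generalizing f X with
  | zero => exact ⟨X, .refl _ _, fun i hi hie => (hleft i hi (by omega)).1⟩
  | succ d ih =>
    by_cases hs : G.Stable X (site a f)
    · refine ⟨X, .refl _ _, fun i hi hie => ?_⟩
      rcases lt_trichotomy i f with hif | rfl | hif
      exacts [(hleft i hi hif).1, hs, hstab i hif hie]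
    obtain ⟨Y, hY, hYleft, -⟩ := exists_extend_leftStable h1 (by omega) hleft hs
    obtain ⟨Z, hZ, hZstab⟩ := ih (f := f + 1) (X := Y) (by omega) (by omega)
      (fun i hi hif => hYleft i hi (by omega)) fun i hi hie =>
        hY.stable (hstab i (by omega) hie) (site_notMem_arc (by omega) (by omega)) <|
          Dir.forall_iff.2 ⟨src_fwd_notMem_arc hi (by omega),
            src_bwd_notMem_arc (by omega) (by omega)⟩
    exact ⟨Z, ((hY.mono (arc_mono (by omega)) (by omega : f ≤ m)).trans hZ).of_le
      (by rw [Nat.mul_succ]; omega), hZstab⟩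

theorem exists_stable_arc (a : ZMod m) (he : e < m) (X : HubState m M) :
    ∃ Z, G.Reach (arc a e) (m ^ 2 * e) X Z ∧ ∀ i, 1 ≤ i → i ≤ e → G.Stable Z (site a i) := by
  induction e generalizing a X with
  | zero => exact ⟨X, .refl _ _, by omega⟩
  | succ e ih =>
    obtain ⟨Y, hY, hYstab⟩ := ih (site a 1) (by omega) X
    obtain ⟨Z, hZ, hZstab⟩ := exists_stable_arc_of_leftStable (G := G) (X := Y) (a := a) he
      (e + 1) le_rfl (by omega) (by omega) fun i hi hie => by
        have := hYstab (i - 1) (by omega) (by omega)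
        rwa [← site_add, Nat.add_sub_cancel' hi.le] at this
    exact ⟨Z, ((hY.mono (arc_site_subset (by omega)) le_rfl).trans hZ).of_le (by nlinarith), hZstab⟩

end Sweep

end HubSystem

/-- A state of the ring, seen in the opposite orientation. -/
def HubState.mirror {m : ℕ} {M : Type*} (X : HubState m M) : HubState m M where
  colour t := X.colour (-t)
  input d t := X.input d.rev (-t)

@[simp]
theorem HubState.mirror_mirror {m : ℕ} {M : Type*} (X : HubState m M) : X.mirror.mirror = X := by
  simp [mirror]

namespace HubSystem

section Mirror

variable {m : ℕ} {M : Type*} {G : HubSystem m M} {X Z : HubState m M} {A : Set (ZMod m)} {c : M}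
  {t p : ZMod m} {k : ℕ}

/-- The ring traversed in the opposite orientation. -/
def mirror (G : HubSystem m M) : HubSystem m M where
  colours t := G.colours (-t)
  relays d t := G.relays d.rev (-t)

@[simp]
theorem mirror_mirror (G : HubSystem m M) : G.mirror.mirror = G := by simp [mirror]

theorem stable_mirror : G.mirror.Stable X.mirror t ↔ G.Stable X (-t) := by
  simp only [Stable, mirror, HubState.mirror, Dir.exists_iff, Dir.forall_iff, Dir.rev]
  tauto

theorem canFire_mirror : G.mirror.CanFire X.mirror t c ↔ G.CanFire X (-t) c := by
  simp only [CanFire, mirror, HubState.mirror, Dir.exists_iff, Dir.forall_iff, Dir.rev]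
  tauto

theorem push_mirror (Y : Set (ZMod m)) :
    G.mirror.push X.mirror (Neg.neg ⁻¹' Y) c = (G.push X Y c).mirror := by
  ext <;> simp [push, mirror, HubState.mirror, Dir.neg_src]

theorem Reach.mirror (h : G.Reach A k X Z) :
    G.mirror.Reach (Neg.neg ⁻¹' A) k X.mirror Z.mirror := by
  induction h with
  | refl => exact .refl _ _
  | head hfire _ ih =>
    obtain ⟨t, ht, c, hc, rfl⟩ := hfire
    refine .head ⟨-t, by simpa using ht, c, canFire_mirror.2 (by simpa using hc), ?_⟩ ih
    rw [← push_mirror]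
    simp

theorem Reach.of_mirror (h : G.mirror.Reach A k X.mirror Z) :
    G.Reach (Neg.neg ⁻¹' A) k X Z.mirror := by
  simpa using h.mirror

end Mirror

section Stabilization

variable {m : ℕ} {M : Type*} {G : HubSystem m M} {X Z : HubState m M} {A : Set (ZMod m)}
  {a o p t : ZMod m} {c : M} {d : Dir} {e j k l n : ℕ}

theorem exists_stable_arc_of_interior (he : e < m)
    (hstab : ∀ i, 1 < i → i < e → G.Stable X (site a i)) :
    ∃ Z, G.Reach (arc a e) (2 * m ^ 2) X Z ∧ ∀ i, 1 ≤ i → i ≤ e → G.Stable Z (site a i) := by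
  obtain ⟨Y, hY, hYstab⟩ := exists_stable_arc_of_leftStable (G := G) (X := X) (a := a)
    (e := e - 1) (by omega) (e - 1) le_rfl (by omega) (by omega)
    fun i hi hie => hstab i hi (by omega)
  have hneg : ∀ i, i ≤ e → -site (-site a (e + 1)) i = site a (e + 1 - i) :=
    fun i hi => neg_site_neg_site a (by omega)
  obtain ⟨Z, hZ, hZstab⟩ := exists_stable_arc_of_leftStable (G := G.mirror) (X := Y.mirror)
    (a := -site a (e + 1)) he e le_rfl (by omega) (by omega) fun i hi hie => by
      rw [stable_mirror, hneg i hie]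
      exact hYstab _ (by omega) (by omega)
  refine ⟨Z.mirror, ?_, fun i hi hie => ?_⟩
  · refine ((hY.mono (arc_mono (by omega)) le_rfl).trans
      (hZ.of_mirror.mono (neg_preimage_arc_subset a e) le_rfl)).of_le ?_
    nlinarith [Nat.sub_le e 1]
  · have := hZstab (e + 1 - i) (by omega) (by omega)
    rwa [← Z.mirror_mirror, stable_mirror, hneg _ (by omega),
      show e + 1 - (e + 1 - i) = i by omega] at this

/-- At most `k` profitable switches of single hubs lead from `X` to a state with all hubs stable. -/
def StabilizesWithin (G : HubSystem m M) (k : ℕ) (X : HubState m M) : Prop :=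
  ∃ Z, G.Reach Set.univ k X Z ∧ ∀ t, G.Stable Z t

theorem stabilizesWithin_of_stable (h : ∀ t, G.Stable X t) : G.StabilizesWithin k X :=
  ⟨X, .refl _ _, h⟩

theorem Reach.stabilizesWithin (h : G.Reach A k X Z) (hZ : G.StabilizesWithin l Z)
    (hn : k + l ≤ n) : G.StabilizesWithin n X :=
  let ⟨W, hW, hstab⟩ := hZ
  ⟨W, ((h.mono (Set.subset_univ A) le_rfl).trans hW).of_le hn, hstab⟩

theorem StabilizesWithin.of_le (h : G.StabilizesWithin k X) (hkl : k ≤ l) :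
    G.StabilizesWithin l X :=
  let ⟨Z, hZ, hstab⟩ := h
  ⟨Z, ReachWithin.of_le hZ hkl, hstab⟩

theorem StabilizesWithin.of_mirror (h : G.mirror.StabilizesWithin k X.mirror) :
    G.StabilizesWithin k X :=
  let ⟨Z, hZ, hstab⟩ := h
  ⟨Z.mirror, hZ.of_mirror.mono (Set.subset_univ _) le_rfl, fun t => by
    simpa using (stable_mirror (X := Z.mirror) (t := -t)).1 (by simpa using hstab (-t))⟩

theorem Locked.stabilizesWithin (hm : 2 ≤ m) (h : Locked X p) :
    G.StabilizesWithin (m ^ 2 * (m - 2)) X := by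
  obtain ⟨Z, hZ, hstab⟩ := exists_stable_arc (G := G) (site p 1) (by omega : m - 2 < m) X
  refine ⟨Z, hZ.mono (Set.subset_univ _) le_rfl, fun t => ?_⟩
  obtain ⟨hcol, hbwd, hfwd⟩ := hZ.locked h
  obtain ⟨i, hi, him, rfl⟩ := exists_site (by omega) (site p 1) t
  rcases (by omega : i ≤ m - 2 ∨ i = m - 1 ∨ i = m) with hlt | rfl | rfl
  · exact hstab i hi hlt
  · rw [← site_add, Nat.add_sub_cancel' (by omega), site_self]
    exact .inl ⟨.bwd, hbwd.symm⟩
  · rw [site_self]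
    exact .inl ⟨.fwd, by simpa [site, hcol] using hfwd.symm⟩

theorem sq_mul_sub_lt {k : ℕ} (hm : 0 < m) (hk : 0 < k) : m ^ 2 * (m - k) < m ^ 3 := by
  rw [pow_succ m 2]
  exact Nat.mul_lt_mul_of_pos_left (Nat.sub_lt hm hk) (by positivity)

theorem stabilizesWithin_of_unstable_succ (hm : 2 ≤ m) (hs : ¬G.Stable X (p + 1))
    (hbwd : X.input .bwd p = X.colour p) (hfwd : X.input .fwd (p + 1) = X.colour p)
    (hmem : X.colour p ∈ G.colours (p + 1)) : G.StabilizesWithin (m ^ 3) X := by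
  obtain ⟨d, hd⟩ := not_stable_iff.1 hs
  have hfire : G.CanFire X (p + 1) (X.colour p) := ⟨hmem, hd.2.1, .fwd, hfwd.symm⟩
  have hp : p ∉ ({p + 1} : Set _) := ((Dir.src_ne hm .bwd p).symm : p ≠ p + 1)
  have hlock : Locked (G.push X {p + 1} (X.colour p)) p := by
    refine ⟨?_, ?_, ?_⟩
    · rw [push_colour_notMem hp, push_colour_self]
    · rw [push_colour_notMem hp]
      exact push_input_eq_or.elim (·.trans hbwd) And.right
    · rw [push_colour_notMem hp, push_input_self hm, hfwd]
  exact (hfire.reach rfl).stabilizesWithin (hlock.stabilizesWithin hm)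
    (by linarith [sq_mul_sub_lt (by omega : 0 < m) two_pos])

theorem stabilizesWithin_of_unstable_pred (hm : 2 ≤ m) (hs : ¬G.Stable X p)
    (hfwd : X.input .fwd (p + 1) = X.colour (p + 1)) (hbwd : X.input .bwd p = X.colour (p + 1))
    (hmem : X.colour (p + 1) ∈ G.colours p) : G.StabilizesWithin (m ^ 3) X := by
  refine .of_mirror (stabilizesWithin_of_unstable_succ (p := -(p + 1)) hm ?_ ?_ ?_ ?_)
  · rwa [stable_mirror, show -(-(p + 1) + 1) = p by ring]
  · simpa [HubState.mirror, Dir.rev] using hfwd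
  · simpa [HubState.mirror, Dir.rev] using hbwd
  · simpa [HubState.mirror, mirror] using hmem

theorem Stable.push_singleton (h : G.Stable X t) (hne : t ≠ o) :
    G.Stable (G.push X {o} c) t ∨
      t = o + 1 ∧ (G.push X {o} c).input .fwd t = c ∨
      t = o - 1 ∧ (G.push X {o} c).input .bwd t = c := by
  refine (h.push_or hne).imp_right ?_
  rintro ⟨_ | _, hsrc, hc⟩
  · exact .inl ⟨sub_eq_iff_eq_add.1 hsrc, hc⟩
  · exact .inr ⟨eq_sub_iff_add_eq.2 hsrc, hc⟩

theorem ncard_push_singleton_lt (hm : 2 ≤ m) (ho : X.colour o ≠ c) :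
    {t | (G.push X {o} c).colour t ≠ c}.ncard < {t | X.colour t ≠ c}.ncard := by
  have : NeZero m := ⟨by omega⟩
  refine Set.ncard_lt_ncard ⟨fun t ht => ?_, fun h => h ho (push_colour_mem rfl)⟩
    (Set.toFinite _)
  have hto : t ∉ ({o} : Set _) := fun h => ht (push_colour_mem h)
  simpa [push_colour_notMem hto] using ht

theorem stable_of_stable_off (ho : G.Stable X o) (hstab : ∀ t, t ≠ o → G.Stable X t) (t : ZMod m) :
    G.Stable X t := by
  by_cases hto : t = o
  exacts [hto ▸ ho, hstab t hto]

theorem push_prefers_fwd {Y : Set (ZMod m)}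
    (h : X.colour t = c ∨ X.input .fwd t = c ∨ X.input .fwd t ∉ G.colours t) :
    (G.push X Y c).colour t = c ∨ (G.push X Y c).input .fwd t = c ∨
      (G.push X Y c).input .fwd t ∉ G.colours t := by
  by_cases ht : t ∈ Y
  · exact .inl (push_colour_mem ht)
  rw [push_colour_notMem ht]
  rcases push_input_eq_or (G := G) (X := X) (Y := Y) (c := c) (d := .fwd) (t := t) with h' | h'
  · rwa [h']
  · exact .inr (.inl h'.2)

theorem Stable.push_of_prefers_fwd (h : G.Stable X t) (hX : G.Admissible X) (hne : t ≠ o)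
    (hfwd : X.colour t = c ∨ X.input .fwd t = c ∨ X.input .fwd t ∉ G.colours t) :
    G.Stable (G.push X {o} c) t ∨
      t = o + 1 ∧ (G.push X {o} c).input .fwd t = c ∧ c ∈ G.colours t ∨
      t = o - 1 ∧ (G.push X {o} c).input .bwd t = c := by
  have hcol : (G.push X {o} c).colour t = X.colour t := push_colour_notMem hne
  by_contra! ⟨hs, hsucc, hpred⟩
  obtain ⟨ht, hc⟩ := ((h.push_singleton hne).resolve_left hs).resolve_right fun h => hpred h.1 h.2
  obtain ⟨d, hd⟩ := not_stable_iff.1 hs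
  cases d with
  | fwd => exact hsucc ht hc (hc ▸ hd.1)
  | bwd =>
    have hbwd : (G.push X {o} c).input .bwd t = X.input .bwd t :=
      push_input_eq_or.resolve_right fun h => hpred (eq_sub_iff_add_eq.2 h.1) h.2
    have hne_c : X.colour t ≠ c := fun h => hs (.inl ⟨.fwd, by rw [hcol, h, hc]⟩)
    rcases h with ⟨_ | _, h⟩ | h
    · rcases hfwd.resolve_left hne_c with h' | h'
      exacts [hne_c (h.trans h'), h' (h ▸ hX t)]
    · exact hs (.inl ⟨.bwd, by rw [hcol, hbwd, h]⟩)
    · exact h .bwd (hbwd ▸ hd.1)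

/-- The switches to `c` run backwards around the ring, each disturbing only the preceding hub. -/
theorem stabilizesWithin_of_backward_run (hm : 2 ≤ m) (hX : G.Admissible X)
    (hstab : ∀ t, t ≠ o → G.Stable X t) (hbwd : X.input .bwd o = c)
    (hfwd : ∀ t, X.colour t = c ∨ X.input .fwd t = c ∨ X.input .fwd t ∉ G.colours t) :
    G.StabilizesWithin ({t | X.colour t ≠ c}.ncard + m ^ 3) X := by
  induction hN : {t | X.colour t ≠ c}.ncard using Nat.strong_induction_on generalizing X o with
  | _ N ih
  by_cases hs : G.Stable X o
  · exact stabilizesWithin_of_stable (stable_of_stable_off hs hstab)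
  have hfire : G.CanFire X o c := by
    obtain ⟨d, hd⟩ := not_stable_iff.1 hs
    have ho : X.colour o ≠ c := hbwd ▸ hd.2.1 .bwd
    cases d with
    | bwd => rwa [hbwd] at hd
    | fwd => rwa [((hfwd o).resolve_left ho).resolve_right (not_not.2 hd.1)] at hd
  have hlt := ncard_push_singleton_lt (G := G) hm (hbwd ▸ hfire.2.1 .bwd : X.colour o ≠ c)
  set Z := G.push X {o} c
  have hreach : G.Reach Set.univ 1 X Z := hfire.reach trivial
  have hcolo : Z.colour o = c := push_colour_self
  have hbwdo : Z.input .bwd o = c := (push_input_self hm).trans hbwd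
  have hstabZ := fun t hto => (hstab t hto).push_of_prefers_fwd (o := o) hX hto (hfwd t)
  by_cases hlock : ¬G.Stable Z (o + 1) ∧ Z.input .fwd (o + 1) = c ∧ c ∈ G.colours (o + 1)
  · exact hreach.stabilizesWithin (stabilizesWithin_of_unstable_succ hm hlock.1
      (by rw [hbwdo, hcolo]) (by rw [hlock.2.1, hcolo]) (by rw [hcolo]; exact hlock.2.2)) (by omega)
  have hstab' : ∀ t, G.Stable Z t ∨ t = o - 1 ∧ Z.input .bwd t = c := fun t => by
    rcases eq_or_ne t o with rfl | hne
    · exact .inl (hfire.stable_push hm)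
    rcases hstabZ t hne with h | ⟨rfl, h⟩ | h
    exacts [.inl h, .inl (of_not_not fun hs => hlock ⟨hs, h⟩), .inr h]
  by_cases hpred : G.Stable Z (o - 1)
  · exact hreach.stabilizesWithin (stabilizesWithin_of_stable (k := 0)
      (stable_of_stable_off hpred fun t ht => (hstab' t).resolve_right fun h => ht h.1)) (by omega)
  refine hreach.stabilizesWithin (ih _ (hN ▸ hlt) (hreach.admissible hX)
    (fun t ht => (hstab' t).resolve_right fun h => ht h.1)
    ((hstab' _).resolve_left hpred).2 (fun t => push_prefers_fwd (hfwd t)) rfl) (by omega)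

theorem Reach.stable_site (h : G.Reach (arc a n) k X Z) (hn : n < j) (hj : j ≤ m)
    (hfwd : Z.input .fwd (site a j) = X.input .fwd (site a j))
    (ha : X.colour a = X.input .fwd a) (hs : G.Stable X (site a j)) : G.Stable Z (site a j) := by
  have hcol := h.colour_eq (site_notMem_arc (a := a) hn hj)
  rcases hj.lt_or_eq with hlt | rfl
  · exact hs.congr hcol
      (Dir.forall_iff.2 ⟨hfwd, h.input_eq (src_bwd_notMem_arc hn.le hlt)⟩)
  · exact .inl ⟨.fwd, by rw [hcol, hfwd, site_self, ha]⟩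

theorem Reach.bwd_eq_colour (h : G.Reach (arc a n) k X Z) (hX : G.Admissible X) (hn : n < m)
    (hs : ¬G.Stable X (site a n)) (hfwd : X.input .fwd (site a n) ∉ G.colours (site a n))
    (hin : Z.input .fwd (site a n) = X.input .fwd (site a n)) (hZ : G.Stable Z (site a n)) :
    Z.input .bwd (site a n) = Z.colour (site a n) := by
  rcases hZ with ⟨_ | _, hd⟩ | hd
  · exact absurd (hd ▸ h.admissible hX _) (hin ▸ hfwd)
  · exact hd.symm
  · obtain ⟨_ | _, hfire⟩ := not_stable_iff.1 hs
    · exact absurd hfire.1 hfwd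
    · exact absurd hfire.1 (h.input_eq (src_bwd_notMem_arc le_rfl hn) ▸ hd .bwd)

/-- The switch of hub `a` has been passed on to the `j` hubs following it, none of which may adopt
its forward input, and only the next hub can be unstable. -/
structure FlipPhase (G : HubSystem m M) (X : HubState m M) (a : ZMod m) (j : ℕ) : Prop where
  lt : j < m
  fwd_notMem : ∀ i, 1 ≤ i → i ≤ j → X.input .fwd (site a i) ∉ G.colours (site a i)
  fwd_eq : X.input .fwd (site a (j + 1)) = X.colour (site a j)
  bwd_eq : X.input .fwd (site a (j + 1)) ∈ G.colours (site a (j + 1)) →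
    X.input .bwd (site a j) = X.colour (site a j)
  start_eq : j + 1 < m → X.colour a = X.input .fwd a
  stable : ∀ t, t ≠ site a (j + 1) → G.Stable X t

namespace FlipPhase

theorem exists_succ (h : G.FlipPhase X a j) (hX : G.Admissible X) (hj : j + 1 < m)
    (hs : ¬G.Stable X (site a (j + 1)))
    (hfwd : X.input .fwd (site a (j + 1)) ∉ G.colours (site a (j + 1))) :
    ∃ Z, G.Reach Set.univ m X Z ∧
      ((∃ p, Locked Z p) ∨ (∀ t, G.Stable Z t) ∨ G.FlipPhase Z a (j + 1)) := by
  have hskip : ∀ i, 1 ≤ i → i ≤ j + 1 → X.input .fwd (site a i) ∉ G.colours (site a i) :=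
    fun i hi hij => (Nat.le_succ_iff.1 hij).elim (h.fwd_notMem i hi) (· ▸ hfwd)
  obtain ⟨Z, hZ, hleft, hlock, hnext⟩ := exists_extend_leftStable (a := a) (by omega) hj
    (fun i hi hij => ⟨h.stable _ (mt (site_inj (by omega) (by omega)).1 (by omega)),
      .inr (hskip i hi hij.le)⟩) hs
  refine ⟨Z, hZ.mono (Set.subset_univ _) hj.le, hlock.imp_right fun hin => ?_⟩
  have hbwd := hZ.bwd_eq_colour hX hj hs hfwd (hin _ (by omega) le_rfl)
    (hleft _ (by omega) le_rfl).1
  have hkeep : ∀ i, j + 1 < i → i ≤ m →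
      Z.input .fwd (site a i) = X.input .fwd (site a i) → G.Stable Z (site a i) :=
    fun i hi him hin => hZ.stable_site hi him hin (h.start_eq hj)
      (h.stable _ (mt (site_inj (by omega) (by omega)).1 (by omega)))
  have hstab : ∀ t, t ≠ site a (j + 1 + 1) → G.Stable Z t := fun t ht => by
    obtain ⟨i, hi, him, rfl⟩ := exists_site (by omega) a t
    by_cases hij : i ≤ j + 1
    · exact (hleft i hi hij).1
    have hne : i ≠ j + 1 + 1 := fun h => ht (h ▸ rfl)
    exact hkeep i (by omega) him (hZ.input_eq (src_fwd_notMem_arc (by omega) him))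
  rcases hnext with hold | hnew
  · exact .inl (stable_of_stable_off (hkeep _ (by omega) hj hold) hstab)
  refine .inr ⟨hj, fun i hi hij => hin i hi hij ▸ hskip i hi hij, hnew, fun _ => hbwd,
    fun hjm => ?_, hstab⟩
  rw [← site_self a, hZ.colour_eq (site_notMem_arc hj le_rfl),
    hZ.input_eq (src_fwd_notMem_arc hjm le_rfl), site_self, h.start_eq hj]

theorem stabilizesWithin_of_mem (hm : 2 ≤ m) (h : G.FlipPhase X a j)
    (hs : ¬G.Stable X (site a (j + 1)))
    (hmem : X.input .fwd (site a (j + 1)) ∈ G.colours (site a (j + 1))) :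
    G.StabilizesWithin (m ^ 3) X := by
  have hsucc : site a j + 1 = site a (j + 1) := src_bwd_site a j
  exact stabilizesWithin_of_unstable_succ hm (hsucc ▸ hs) (h.bwd_eq hmem) (hsucc ▸ h.fwd_eq)
    (by rw [hsucc, ← h.fwd_eq]; exact hmem)

theorem stabilizesWithin (hm : 2 ≤ m) (h : G.FlipPhase X a j) (hX : G.Admissible X) :
    G.StabilizesWithin ((m - j) * m + 2 * m ^ 3) X := by
  induction hk : m - j generalizing X j with
  | zero => exact absurd h.lt (by omega)
  | succ k ih =>
    by_cases hs : G.Stable X (site a (j + 1))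
    · exact stabilizesWithin_of_stable (stable_of_stable_off hs h.stable)
    by_cases hmem : X.input .fwd (site a (j + 1)) ∈ G.colours (site a (j + 1))
    · exact (h.stabilizesWithin_of_mem hm hs hmem).of_le (by omega)
    have hkm : m ≤ (k + 1) * m := Nat.le_mul_of_pos_left m k.succ_pos
    rcases (Nat.succ_le_of_lt h.lt).eq_or_lt with heq | hj
    · have hskip : ∀ t, X.input .fwd t ∉ G.colours t := fun t => by
        obtain ⟨i, hi, him, rfl⟩ := exists_site (by omega) a t
        rcases (by omega : i ≤ j ∨ i = j + 1) with hij | rfl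
        exacts [h.fwd_notMem i hi hij, hmem]
      have hcard := ncard_zmod_le (by omega)
        {t | X.colour t ≠ X.input .bwd (site a (j + 1))}
      exact (stabilizesWithin_of_backward_run hm hX h.stable rfl fun t =>
        .inr (.inr (hskip t))).of_le (by omega)
    obtain ⟨Z, hZ, ⟨p, hlock⟩ | hstab | hflip⟩ := h.exists_succ hX hj hs hmem
    · refine hZ.stabilizesWithin (hlock.stabilizesWithin hm) ?_
      nlinarith [sq_mul_sub_lt (by omega : 0 < m) two_pos]
    · exact hZ.stabilizesWithin (stabilizesWithin_of_stable hstab (k := 0)) (by omega)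
    · exact hZ.stabilizesWithin (ih hflip (hZ.admissible hX) (by omega)) (by nlinarith)

end FlipPhase

theorem FlipPhase.zero (hm : 0 < m) (hcol : X.colour a = X.input .fwd a)
    (hfwd : X.input .fwd (a + 1) = X.colour a) (hnot : X.input .fwd (a + 1) ∉ G.colours (a + 1))
    (hstab : ∀ t, t ≠ a + 1 → G.Stable X t) : G.FlipPhase X a 0 := by
  have hsite : site a (0 + 1) = a + 1 := by simp [site]
  exact ⟨hm, by omega, by rwa [hsite, site_zero], fun h => absurd (hsite ▸ h) hnot, fun _ => hcol,
    by rwa [hsite]⟩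

theorem stabilizesWithin_of_forward_run (hm : 2 ≤ m) (hX : G.Admissible X)
    (hstab : ∀ t, t ≠ o → G.Stable X t) (hfwd : X.input .fwd o = c) (ho : c ∈ G.colours o)
    (hpred : c ∈ G.colours (o - 1)) :
    G.StabilizesWithin ({t | X.colour t ≠ c}.ncard + 3 * m ^ 3) X := by
  induction hN : {t | X.colour t ≠ c}.ncard using Nat.strong_induction_on generalizing X o with
  | _ N ih
  by_cases hs : G.Stable X o
  · exact stabilizesWithin_of_stable (stable_of_stable_off hs hstab)
  have hfire : G.CanFire X o c :=
    let ⟨_, hd⟩ := not_stable_iff.1 hs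
    ⟨ho, hd.2.1, .fwd, hfwd.symm⟩
  have hlt := ncard_push_singleton_lt (G := G) hm (hfwd ▸ hfire.2.1 .fwd : X.colour o ≠ c)
  set Z := G.push X {o} c
  have hreach : G.Reach Set.univ 1 X Z := hfire.reach trivial
  have hcol : Z.colour o = c := push_colour_self
  have hfwdo : Z.input .fwd o = c := (push_input_self hm).trans hfwd
  by_cases hlock : ¬G.Stable Z (o - 1) ∧ Z.input .bwd (o - 1) = c
  · exact hreach.stabilizesWithin (stabilizesWithin_of_unstable_pred hm hlock.1
      (by rw [sub_add_cancel, hcol, hfwdo]) (by rw [sub_add_cancel, hcol, hlock.2])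
      (by rwa [sub_add_cancel, hcol])) (by omega)
  have hstab' : ∀ t, G.Stable Z t ∨ t = o + 1 ∧ Z.input .fwd t = c := fun t => by
    rcases eq_or_ne t o with rfl | hne
    · exact .inl (hfire.stable_push hm)
    rcases (hstab t hne).push_singleton hne with h | h | ⟨rfl, h⟩
    exacts [.inl h, .inr h, .inl (of_not_not fun hs => hlock ⟨hs, h⟩)]
  have hoff : ∀ t, t ≠ o + 1 → G.Stable Z t := fun t ht =>
    (hstab' t).resolve_right fun h => ht h.1
  rcases hstab' (o + 1) with hsucc | ⟨-, hsucc⟩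
  · exact hreach.stabilizesWithin (stabilizesWithin_of_stable (k := 0)
      (stable_of_stable_off hsucc hoff)) (by omega)
  by_cases hmem : c ∈ G.colours (o + 1)
  · exact hreach.stabilizesWithin (ih _ (hN ▸ hlt) (hreach.admissible hX) hoff hsucc hmem
      (by rwa [add_sub_cancel_right]) rfl) (by omega)
  have hflip := FlipPhase.zero (by omega) (hcol.trans hfwdo.symm) (hsucc.trans hcol.symm)
    (hsucc ▸ hmem) hoff
  exact hreach.stabilizesWithin (hflip.stabilizesWithin hm (hreach.admissible hX))
    (by nlinarith [Nat.mul_le_mul_right (m * m) hm, Nat.sub_zero m])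

theorem exists_stable_off (hm : 2 ≤ m) (o : ZMod m) (X : HubState m M) :
    ∃ Z, G.Reach (arc o (m - 1)) (m ^ 2 * (m - 1)) X Z ∧ ∀ t, t ≠ o → G.Stable Z t := by
  obtain ⟨Z, hZ, hstab⟩ := exists_stable_arc (G := G) o (by omega : m - 1 < m) X
  refine ⟨Z, hZ, fun t ht => ?_⟩
  obtain ⟨i, hi, him, rfl⟩ := exists_site (by omega) o t
  have hne : i ≠ m := fun h => ht (by rw [h, site_self])
  exact hstab i hi (by omega)

theorem CanFire.exists_round (hm : 2 ≤ m) (hfire : G.CanFire X o (X.input d o)) :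
    ∃ Z, G.Reach Set.univ (m ^ 3) X Z ∧ (∀ t, t ≠ o → G.Stable Z t) ∧
      (G.Stable Z o ∨ Z.input d o ∈ G.colours (d.src o)) := by
  obtain ⟨Z, hZ, hoff⟩ := exists_stable_off (G := G) hm o (G.push X {o} (X.input d o))
  refine ⟨Z, ((hfire.reach (Set.mem_univ o)).trans (hZ.mono (Set.subset_univ _) le_rfl)).of_le
    (by linarith [sq_mul_sub_lt (by omega : 0 < m) one_pos]), hoff,
    (hZ.input_eq_or_mem d o).imp_left fun h => .inl ⟨d, ?_⟩⟩
  have hnot : o ∉ arc o (m - 1) := by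
    simpa using site_notMem_arc (a := o) (by omega : m - 1 < m) le_rfl
  rw [hZ.colour_eq hnot, push_colour_self, h, push_input_self hm]

/-- Switching `o` and restabilising the other hubs refreshes the input that `o` has followed, so two
such rounds refresh both inputs. -/
theorem exists_stable_off_of_fresh (hm : 2 ≤ m) (o : ZMod m) (X : HubState m M) :
    ∃ Z, G.Reach Set.univ (3 * m ^ 3) X Z ∧ (∀ t, t ≠ o → G.Stable Z t) ∧
      (G.Stable Z o ∨
        ∃ d, G.CanFire Z o (Z.input d o) ∧ Z.input d o ∈ G.colours (d.src o)) := by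
  obtain ⟨X₀, hX₀, hoff⟩ := exists_stable_off (G := G) hm o X
  have hreach : G.Reach Set.univ (m ^ 3) X X₀ :=
    hX₀.mono (Set.subset_univ _) (by linarith [sq_mul_sub_lt (by omega : 0 < m) one_pos])
  by_cases hs : G.Stable X₀ o
  · exact ⟨X₀, hreach.of_le (by omega), hoff, .inl hs⟩
  obtain ⟨d, hd⟩ := not_stable_iff.1 hs
  obtain ⟨X₁, hX₁, hoff₁, ho₁⟩ := hd.exists_round hm
  have hreach₁ := hreach.trans hX₁
  by_cases hs₁ : G.Stable X₁ o
  · exact ⟨X₁, hreach₁.of_le (by omega), hoff₁, .inl hs₁⟩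
  have hmem : X₁.input d o ∈ G.colours (d.src o) := ho₁.resolve_left hs₁
  obtain ⟨d', hd'⟩ := not_stable_iff.1 hs₁
  by_cases hdd : d' = d
  · exact ⟨X₁, hreach₁.of_le (by omega), hoff₁, .inr ⟨d, hdd ▸ hd', hmem⟩⟩
  obtain ⟨X₂, hX₂, hoff₂, ho₂⟩ := hd'.exists_round hm
  refine ⟨X₂, (hreach₁.trans hX₂).of_le (by omega), hoff₂, or_iff_not_imp_left.2 fun hs₂ => ?_⟩
  obtain ⟨e, he⟩ := not_stable_iff.1 hs₂
  refine ⟨e, he, ?_⟩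
  by_cases hed : e = d'
  · exact hed ▸ ho₂.resolve_left hs₂
  · have : e = d := by cases d <;> cases d' <;> cases e <;> simp_all
    exact this ▸ Reach.input_mem hX₂ hmem

theorem stabilizesWithin (hm : 2 ≤ m) (hX : G.Admissible X) : G.StabilizesWithin (7 * m ^ 3) X := by
  have hcard : ∀ S : Set (ZMod m), S.ncard ≤ m ^ 3 := fun S =>
    (ncard_zmod_le (by omega) S).trans (Nat.le_self_pow (by omega) m)
  obtain ⟨Z, hZ, hoff, hs | ⟨d, hfire, hmem⟩⟩ := exists_stable_off_of_fresh (G := G) hm 0 X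
  · exact hZ.stabilizesWithin (stabilizesWithin_of_stable (k := 0) (stable_of_stable_off hs hoff))
      (by omega)
  refine hZ.stabilizesWithin (l := 4 * m ^ 3) ?_ (by omega)
  have hadm := hZ.admissible hX
  cases d with
  | fwd =>
    refine (stabilizesWithin_of_forward_run hm hadm hoff rfl hfire.1 hmem).of_le ?_
    linarith [hcard {t | Z.colour t ≠ Z.input .fwd 0}]
  | bwd =>
    refine .of_mirror ((stabilizesWithin_of_forward_run (o := 0) (c := Z.input .bwd 0) hm
      (fun t => hadm (-t)) (fun t ht => stable_mirror.2 (hoff _ (neg_ne_zero.2 ht)))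
      ?_ ?_ ?_).of_le ?_)
    · simp [HubState.mirror, Dir.rev]
    · simpa [mirror] using hfire.1
    · simpa [mirror, Dir.src] using hmem
    · linarith [hcard {t | Z.mirror.colour t ≠ Z.input .bwd 0}]

/-- The hubs outside the arc support each other, so only those of the arc have to switch. -/
theorem exists_stable_of_push_compl (he : e < m) (hX : ∀ t, G.Stable X t)
    (hc : ∀ t ∉ arc a e, ∃ d, d.src t ∉ arc a e ∧ c ∈ G.relays d t) :
    ∃ Z, G.Reach (arc a e) (2 * m ^ 2) (G.push X (arc a e)ᶜ c) Z ∧ ∀ t, G.Stable Z t := by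
  have hsrc_mem : ∀ i, 1 < i → i < e → ∀ d : Dir, d.src (site a i) ∈ arc a e := by
    refine fun i hi hie => Dir.forall_iff.2 ⟨?_, ?_⟩
    · obtain ⟨i, rfl⟩ := Nat.exists_eq_add_of_le' hi.le
      rw [src_fwd_site_succ]
      exact site_mem (by omega) (by omega)
    · rw [src_bwd_site]
      exact site_mem (by omega) hie
  obtain ⟨Z, hZ, hstab⟩ := exists_stable_arc_of_interior (G := G) (X := G.push X (arc a e)ᶜ c) he
    fun i hi hie => (hX _).congr (push_colour_notMem (not_not.2 (site_mem (by omega) hie.le)))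
      fun d => push_input_notMem (not_not.2 (hsrc_mem i hi hie d))
  refine ⟨Z, hZ, fun t => ?_⟩
  by_cases ht : t ∈ arc a e
  · obtain ⟨i, hi, hie, rfl⟩ := ht
    exact hstab i hi hie
  · obtain ⟨d, hsrc, hrelay⟩ := hc t ht
    refine .inl ⟨d, ?_⟩
    rw [hZ.colour_eq ht, hZ.input_eq hsrc, push_colour_mem ht]
    exact (if_pos ⟨hsrc, hrelay⟩).symm

end Stabilization

end HubSystem

section Game

variable {V M : Type} [Fintype V] {adj : V → V → Prop} {C : V → Finset M} {s s' : V → M} {c : M}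
  {x u v : V}

theorem ProfDev.restrict {w : V → V → ℝ} {β : V → M → ℕ} {K : Set V} (hw : ∀ j i, 0 ≤ w j i)
    (h : ProfDev adj w β C s s') (hs : Valid C s) (hne : K.Nonempty)
    (hK : ∀ x ∈ K, s x ≠ s' x ∧ s' x = c)
    (hclosed : ∀ x ∈ K, ∀ j, adj j x → s j ≠ s' j → s' j = c → j ∈ K) :
    ProfDev adj w β C s (K.piecewise (fun _ => c) s) := by
  have hnot : ∀ x ∉ K, K.piecewise (fun _ => c) s x = s x := fun x => K.piecewise_eq_of_notMem _ _
  have hmem : ∀ x ∈ K, K.piecewise (fun _ => c) s x = c := fun x => K.piecewise_eq_of_mem _ _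
  refine ⟨fun x => ?_, fun heq => ?_, fun x hx => ?_⟩
  · by_cases hx : x ∈ K
    · rw [hmem x hx, ← (hK x hx).2]
      exact h.1 x
    · rw [hnot x hx]
      exact hs x
  · obtain ⟨x, hx⟩ := hne
    exact (hK x hx).1 (by rw [(hK x hx).2, ← hmem x hx, ← heq])
  · have hxK : x ∈ K := of_not_not fun hx' => hx (hnot x hx').symm
    refine (h.2.2 x (hK x hxK).1).trans_le ?_
    rw [payoff, payoff, hmem x hxK, (hK x hxK).2, add_le_add_iff_right]
    refine Finset.sum_le_sum_of_subset_of_nonneg (fun j => ?_) fun _ _ _ => hw _ _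
    simp only [Finset.mem_filter, Finset.mem_univ, true_and]
    refine fun ⟨hj, hjc⟩ => ⟨hj, ?_⟩
    by_cases hjK : j ∈ K
    · exact hmem j hjK
    · rw [hnot j hjK, ← hjc]
      exact of_not_not fun hne => hjK (hclosed x hxK j hj hne hjc)

/-- A profitable deviation in the unweighted game without bonuses. -/
abbrev Improves (adj : V → V → Prop) (C : V → Finset M) (s s' : V → M) : Prop :=
  ProfDev adj (fun _ _ => 1) (fun _ _ => 0) C s s'

theorem payoff_unweighted :
    payoff adj (fun _ _ => 1) (fun _ _ => 0) s x = {j | adj j x ∧ s j = s x}.ncard := by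
  simp [payoff, Set.ncard_eq_toFinset_card']

theorem Improves.ncard_lt (h : Improves adj C s s') (hx : s x ≠ s' x) :
    {j | adj j x ∧ s j = s x}.ncard < {j | adj j x ∧ s' j = s' x}.ncard := by
  have := h.2.2 x hx
  rwa [payoff_unweighted, payoff_unweighted, Nat.cast_lt] at this

theorem Improves.exists_supporter (h : Improves adj C s s') (hx : s x ≠ s' x) :
    ∃ j, adj j x ∧ s' j = s' x :=
  (Set.ncard_pos (Set.toFinite _)).1 ((Nat.zero_le _).trans_lt (h.ncard_lt hx))

theorem Improves.exists_dissenter (h : Improves adj C s s') (hx : s x ≠ s' x) :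
    ∃ j, adj j x ∧ s j ≠ s x := by
  by_contra! hall
  exact (h.ncard_lt hx).not_ge
    (Set.ncard_le_ncard (fun j hj => ⟨hj.1, hall j hj.1⟩) (Set.toFinite _))

theorem Improves.agree_of_supported (h : Improves adj C s s') (hx : s x ≠ s' x)
    (hcard : {j | adj j x}.ncard ≤ 2) (hsupp : ∃ j, adj j x ∧ s j = s x) {j : V} (hj : adj j x) :
    s' j = s' x := by
  have hpos : 0 < {j | adj j x ∧ s j = s x}.ncard := (Set.ncard_pos (Set.toFinite _)).2 hsupp
  have hsub : {j | adj j x ∧ s' j = s' x} ⊆ {j | adj j x} := fun _ => And.left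
  have heq := Set.eq_of_subset_of_ncard_le hsub (by linarith [h.ncard_lt hx]) (Set.toFinite _)
  exact (heq.ge hj).2

theorem reachWithin_one_of_unsupported (hs' : Valid C s')
    (h : ∀ x, s x ≠ s' x → (∀ j, adj j x → s j ≠ s x) ∧ ∃ j, adj j x ∧ s' j = s' x) :
    ReachWithin (Improves adj C) 1 s s' := by
  by_cases hne : s = s'
  · exact hne ▸ .refl _ _
  refine .single ⟨hs', hne, fun x hx => ?_⟩
  obtain ⟨hnone, hsome⟩ := h x hx
  have hempty : {j | adj j x ∧ s j = s x} = ∅ := Set.eq_empty_of_forall_notMem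
    fun j hj => hnone j hj.1 hj.2
  rw [payoff_unweighted, payoff_unweighted, hempty, Set.ncard_empty, Nat.cast_lt]
  exact (Set.ncard_pos (Set.toFinite _)).2 hsome

/-- The nodes of `L` that copy their in-neighbour form a coalition that does not disturb itself. -/
theorem exists_copy {L : Set V} (hs : Valid C s)
    (hL : ∀ x ∈ L, ∃ u ∉ L, ∀ j, adj j x ↔ j = u) :
    ∃ s', ReachWithin (Improves adj C) 1 s s' ∧ (∀ x ∉ L, s' x = s x) ∧
      ∀ x ∈ L, ∀ u, adj u x → s' x = if s u ∈ C x then s u else s x := by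
  choose! p hpL hp using hL
  let s' x := if x ∈ L ∧ s (p x) ∈ C x then s (p x) else s x
  have hnot : ∀ x ∉ L, s' x = s x := fun x hx => if_neg fun h => hx h.1
  refine ⟨s', reachWithin_one_of_unsupported (fun x => ?_) fun x hx => ?_, hnot,
    fun x hx u hu => ?_⟩
  · by_cases h : x ∈ L ∧ s (p x) ∈ C x
    · simpa only [s', if_pos h] using h.2
    · simpa only [s', if_neg h] using hs x
  · have h : x ∈ L ∧ s (p x) ∈ C x := by
      by_contra h
      exact hx (if_neg h).symm
    have hxp : s' x = s (p x) := if_pos h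
    refine ⟨fun j hj heq => hx ?_, p x, (hp x h.1 _).2 rfl, ?_⟩
    · rw [hxp, ← heq, (hp x h.1 j).1 hj]
    · rw [hxp, hnot _ (hpL x h.1)]
  · simp only [s', (hp x hx u).1 hu, hx, true_and]

theorem ReachWithin.valid {k : ℕ} (h : ReachWithin (Improves adj C) k s s') (hs : Valid C s) :
    Valid C s' :=
  h.preserves (fun _ _ h _ => h.1) hs

end Game

/-- A directed graph composed of `m` cycles arranged in a ring, consecutive ones sharing a hub.
Segment `seg d t` leaves hub `t` in direction `d` and has `len d t` nodes, the first of which is the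
hub itself; its last node points to the next hub in that direction. The segments
`seg .fwd (t - 1)` and `seg .bwd t` form the cycle through the hubs `t - 1` and `t`. -/
structure CycleRing {V : Type} (adj : V → V → Prop) (m n : ℕ) where
  hub : ZMod m → V
  seg : Dir → ZMod m → ℕ → V
  len : Dir → ZMod m → ℕ
  two_le : 2 ≤ m
  len_pos : ∀ d t, 0 < len d t
  len_le : ∀ d t, len d t ≤ n
  three_le : ∀ t, 3 ≤ len .fwd (t - 1) + len .bwd t
  seg_zero : ∀ d t, seg d t 0 = hub t
  seg_inj : ∀ {d d' t t' i i'}, i < len d t → i' < len d' t' → seg d t i = seg d' t' i' →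
    t = t' ∧ i = i' ∧ (i = 0 ∨ d = d')
  exists_seg : ∀ v, ∃ d t i, i < len d t ∧ seg d t i = v
  adj_seg : ∀ {d t i u}, i + 1 < len d t → (adj u (seg d t (i + 1)) ↔ u = seg d t i)
  adj_hub : ∀ {t u}, adj u (hub t) ↔ ∃ d : Dir, u = seg d (d.src t) (len d (d.src t) - 1)

namespace CycleRing

variable {V M : Type} {adj : V → V → Prop} {m n : ℕ} {R : CycleRing adj m n}
  {C : V → Finset M} {s s' : V → M} {c : M} {d d' : Dir} {t t' : ZMod m} {i i' k : ℕ}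

/-- The last node of the segment entering hub `t` in direction `d`. -/
def pred (R : CycleRing adj m n) (d : Dir) (t : ZMod m) : V :=
  R.seg d (d.src t) (R.len d (d.src t) - 1)

/-- The ring of hubs underlying a game: a segment relays the colours available to all of its inner
nodes. -/
def hubSystem (R : CycleRing adj m n) (C : V → Finset M) : HubSystem m M where
  colours t := {c | c ∈ C (R.hub t)}
  relays d t := {c | ∀ i, i + 1 < R.len d (d.src t) → c ∈ C (R.seg d (d.src t) (i + 1))}

/-- The colours of the hubs and of the nodes pointing to them. -/
def hubState (R : CycleRing adj m n) (s : V → M) : HubState m M where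
  colour t := s (R.hub t)
  input d t := s (R.pred d t)

/-- Every inner node of a segment follows its predecessor if it can. -/
def Settled (R : CycleRing adj m n) (C : V → Finset M) (s : V → M) : Prop :=
  ∀ d t i, i + 1 < R.len d t → s (R.seg d t i) ∈ C (R.seg d t (i + 1)) →
    s (R.seg d t (i + 1)) = s (R.seg d t i)

theorem adj_hub_pred (d : Dir) (t : ZMod m) : adj (R.pred d t) (R.hub t) := R.adj_hub.2 ⟨d, rfl⟩

theorem seg_eq_hub (hi : i < R.len d t) : R.seg d t i = R.hub t' ↔ t = t' ∧ i = 0 := by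
  refine ⟨fun h => ?_, ?_⟩
  · rw [← R.seg_zero d] at h
    have := R.seg_inj hi (R.len_pos d t') h
    exact ⟨this.1, this.2.1⟩
  · rintro ⟨rfl, rfl⟩
    exact R.seg_zero d t

theorem ncard_adj_hub_le (R : CycleRing adj m n) (t : ZMod m) :
    {j | adj j (R.hub t)}.ncard ≤ 2 := by
  have : {j | adj j (R.hub t)} = {R.pred .fwd t, R.pred .bwd t} :=
    Set.ext fun j => R.adj_hub.trans Dir.exists_iff
  exact this ▸ (Set.ncard_insert_le _ _).trans_eq (by rw [Set.ncard_singleton])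

theorem spread_seg (hs : R.Settled C s) {K : Set V} {Y : Set (ZMod m)}
    (hvalid : ∀ x ∈ K, c ∈ C x) (hK : ∀ t, R.hub t ∈ K ↔ t ∈ Y)
    (hclosed : ∀ d t i, i + 1 < R.len d t → R.seg d t (i + 1) ∈ K → R.seg d t i ∈ K)
    (hhub : ∀ t, s' (R.hub t) = K.piecewise (fun _ => c) s (R.hub t))
    (hrec : ∀ d t i, i + 1 < R.len d t → s' (R.seg d t (i + 1)) =
      if s' (R.seg d t i) ∈ C (R.seg d t (i + 1)) then s' (R.seg d t i)
      else K.piecewise (fun _ => c) s (R.seg d t (i + 1))) (hi : i < R.len d t) :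
    (t ∈ Y ∧ ∀ i' < i, c ∈ C (R.seg d t (i' + 1))) ∧ s' (R.seg d t i) = c ∨
      ¬(t ∈ Y ∧ ∀ i' < i, c ∈ C (R.seg d t (i' + 1))) ∧ R.seg d t i ∉ K ∧
        s' (R.seg d t i) = s (R.seg d t i) := by
  induction i with
  | zero =>
    rw [R.seg_zero, hhub, hK]
    by_cases ht : t ∈ Y
    · exact .inl ⟨⟨ht, by simp⟩, K.piecewise_eq_of_mem _ _ ((hK t).2 ht)⟩
    · exact .inr ⟨fun h => ht h.1, ht, K.piecewise_eq_of_notMem _ _ (mt (hK t).1 ht)⟩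
  | succ i ih =>
    have hstay (h : R.seg d t (i + 1) ∉ K) :=
      K.piecewise_eq_of_notMem (fun _ => c) s h
    rw [hrec d t i hi]
    rcases ih (by omega) with ⟨⟨ht, hcond⟩, hc⟩ | ⟨hcond, hnot, hc⟩ <;> rw [hc]
    · by_cases hmem : c ∈ C (R.seg d t (i + 1))
      · exact .inl ⟨⟨ht, Nat.forall_lt_succ_right.2 ⟨hcond, hmem⟩⟩, if_pos hmem⟩
      · have hnext := mt (hvalid _) hmem
        exact .inr ⟨fun h => hmem (h.2 i i.lt_succ_self), hnext, by rw [if_neg hmem, hstay hnext]⟩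
    · have hnext := mt (hclosed d t i hi) hnot
      refine .inr ⟨fun h => hcond ⟨h.1, fun i' hi' => h.2 i' (by omega)⟩, hnext, ?_⟩
      split_ifs with hmem
      exacts [(hs d t i hi hmem).symm, hstay hnext]

section Game

variable [Fintype V]

theorem exists_settle_upTo (R : CycleRing adj m n) (hs : Valid C s) (k : ℕ) :
    ∃ s', ReachWithin (Improves adj C) k s s' ∧
      (∀ d t i, i < R.len d t → (i = 0 ∨ k < i) → s' (R.seg d t i) = s (R.seg d t i)) ∧
      ∀ d t i, i + 1 < R.len d t → i < k → s' (R.seg d t (i + 1)) =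
        if s' (R.seg d t i) ∈ C (R.seg d t (i + 1)) then s' (R.seg d t i)
        else s (R.seg d t (i + 1)) := by
  induction k with
  | zero => exact ⟨s, .refl _ _, fun _ _ _ _ _ => rfl, by omega⟩
  | succ k ih =>
    obtain ⟨s₁, hreach, hfar, hnear⟩ := ih
    let L : Set V := {x | ∃ d t, k + 1 < R.len d t ∧ x = R.seg d t (k + 1)}
    have hL : ∀ {d t i}, i < R.len d t → i ≠ k + 1 → R.seg d t i ∉ L :=
      fun hi hne ⟨d', t', hk, h⟩ => hne (R.seg_inj hi hk h).2.1
    obtain ⟨s₂, hcopy, hout, hin⟩ := exists_copy (L := L) (hreach.valid hs) (by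
      rintro _ ⟨d, t, hk, rfl⟩
      exact ⟨_, hL (by omega) (by omega), fun j => R.adj_seg hk⟩)
    refine ⟨s₂, hreach.trans hcopy, fun d t i hi h => ?_, fun d t i hi hik => ?_⟩
    · rw [hout _ (hL hi (by omega)), hfar d t i hi (by omega)]
    · rw [hout (R.seg d t i) (hL (by omega) (by omega))]
      rcases (Nat.lt_succ_iff.1 hik).lt_or_eq with hlt | rfl
      · rw [hout _ (hL hi (by omega)), hnear d t i hi hlt]
      · rw [hin _ ⟨d, t, hi, rfl⟩ _ ((R.adj_seg hi).2 rfl), hfar d t _ hi (.inr (by omega))]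

theorem exists_settle (R : CycleRing adj m n) (hs : Valid C s) :
    ∃ s', ReachWithin (Improves adj C) n s s' ∧ (∀ t, s' (R.hub t) = s (R.hub t)) ∧
      ∀ d t i, i + 1 < R.len d t → s' (R.seg d t (i + 1)) =
        if s' (R.seg d t i) ∈ C (R.seg d t (i + 1)) then s' (R.seg d t i)
        else s (R.seg d t (i + 1)) := by
  obtain ⟨s', hreach, hfar, hnear⟩ := R.exists_settle_upTo hs n
  refine ⟨s', hreach, fun t => ?_, fun d t i hi => hnear d t i hi ?_⟩
  · simpa only [R.seg_zero] using hfar .fwd t 0 (R.len_pos _ t) (.inl rfl)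
  · exact (by omega : i < R.len d t).trans_le (R.len_le d t)

theorem exists_spread (R : CycleRing adj m n) (hs : R.Settled C s) {K : Set V} {Y : Set (ZMod m)}
    (hvalid : Valid C (K.piecewise (fun _ => c) s)) (hK : ∀ t, R.hub t ∈ K ↔ t ∈ Y)
    (hclosed : ∀ d t i, i + 1 < R.len d t → R.seg d t (i + 1) ∈ K → R.seg d t i ∈ K) :
    ∃ s', ReachWithin (Improves adj C) n (K.piecewise (fun _ => c) s) s' ∧ R.Settled C s' ∧
      R.hubState s' = (R.hubSystem C).push (R.hubState s) Y c ∧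
      ∀ d t, R.pred d t ∈ K → ∀ i < R.len d (d.src t), s' (R.seg d (d.src t) i) = c := by
  obtain ⟨s', hreach, hhub, hrec⟩ := R.exists_settle hvalid
  have hmem : ∀ x ∈ K, c ∈ C x := fun x hx =>
    (K.piecewise_eq_of_mem (fun _ => c) s hx).subst (motive := (· ∈ C x)) (hvalid x)
  have hseg := fun {d t i} => spread_seg (d := d) (t := t) (i := i) hs hmem hK hclosed hhub hrec
  have hlast : ∀ d t, R.len d t - 1 < R.len d t := fun d t => Nat.sub_lt (R.len_pos d t) one_pos
  refine ⟨s', hreach, fun d t i hi h => by rw [hrec d t i hi, if_pos h], ?_, fun d t hp i hi => ?_⟩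
  · ext
    · simp only [hubState, HubSystem.push, hhub, Set.piecewise, hK]
    · rename_i d t
      change s' (R.pred d t) = if _ then c else s (R.pred d t)
      have hcond : (d.src t ∈ Y ∧ c ∈ (R.hubSystem C).relays d t) ↔ d.src t ∈ Y ∧
          ∀ i < R.len d (d.src t) - 1, c ∈ C (R.seg d (d.src t) (i + 1)) := by
        simp only [hubSystem, Set.mem_ofPred_eq, Nat.lt_sub_iff_add_lt]
      rcases hseg (hlast d (d.src t)) with ⟨h, hc⟩ | ⟨h, -, hc⟩
      · rw [if_pos (hcond.2 h)]
        exact hc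
      · rw [if_neg (mt hcond.1 h)]
        exact hc
  · have hcond := (hseg (hlast d (d.src t))).resolve_right fun h => h.2.1 hp
    exact ((hseg hi).resolve_right fun h => h.1 ⟨hcond.1.1, fun i' hi' =>
      hcond.1.2 i' (by omega)⟩).2

theorem exists_push_of_canFire (hs : R.Settled C s) (hv : Valid C s)
    (h : (R.hubSystem C).CanFire (R.hubState s) t c) :
    ∃ s', ReachWithin (Improves adj C) (n + 1) s s' ∧ R.Settled C s' ∧
      R.hubState s' = (R.hubSystem C).push (R.hubState s) {t} c := by
  obtain ⟨hc, hunsupp, d, hd⟩ := h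
  have hhub : ∀ t', R.hub t' = R.hub t ↔ t' = t := fun t' => by
    rw [← R.seg_zero .fwd, seg_eq_hub (R.len_pos _ _), and_iff_left rfl]
  have hvalid : Valid C (Set.piecewise {R.hub t} (fun _ => c) s) := fun x => by
    by_cases hx : x = R.hub t
    · simpa [hx, hubSystem] using hc
    · simpa [hx] using hv x
  obtain ⟨s', hreach, hs', hpush, -⟩ := R.exists_spread hs hvalid (Y := {t}) (by simpa using hhub)
    fun d t i hi h => absurd ((seg_eq_hub hi).1 h).2 i.succ_ne_zero
  refine ⟨s', ?_, hs', hpush⟩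
  rw [add_comm]
  refine (reachWithin_one_of_unsupported hvalid fun x hx => ?_).trans hreach
  obtain rfl : x = R.hub t := of_not_not fun h => hx (by simp [h])
  have hpred : R.pred d t ≠ R.hub t := fun h =>
    d.src_ne R.two_le t ((seg_eq_hub (Nat.sub_lt (R.len_pos _ _) one_pos)).1 h).1
  refine ⟨fun j hj => ?_, R.pred d t, adj_hub_pred d t, by simpa [hpred, hubState] using hd.symm⟩
  obtain ⟨d', rfl⟩ := R.adj_hub.1 hj
  exact (hunsupp d').symm

theorem exists_reach (hs : R.Settled C s) (hv : Valid C s) {A : Set (ZMod m)} {Z : HubState m M}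
    (h : (R.hubSystem C).Reach A k (R.hubState s) Z) :
    ∃ s', ReachWithin (Improves adj C) (k * (n + 1)) s s' ∧ R.Settled C s' ∧ R.hubState s' = Z := by
  generalize hX : R.hubState s = X at h
  induction h generalizing s with
  | refl => exact ⟨s, .refl _ _, hs, hX⟩
  | head hfire _ ih =>
    obtain ⟨t, -, c, hc, rfl⟩ := hfire
    obtain ⟨s₁, hreach₁, hs₁, hpush⟩ := exists_push_of_canFire hs hv (hX ▸ hc)
    obtain ⟨s₂, hreach₂, hs₂, hZ⟩ := ih hs₁ (hreach₁.valid hv) (hX ▸ hpush)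
    exact ⟨s₂, (hreach₁.trans hreach₂).of_le (by linarith), hs₂, hZ⟩

/-- The nodes that switch to the colour `c` when the joint strategy changes from `s` to `s'`. -/
def switched (s s' : V → M) (c : M) : Set V := {x | s x ≠ s' x ∧ s' x = c}

theorem switched_seg_of_succ (hs : R.Settled C s) (h : Improves adj C s s')
    (hi : i + 1 < R.len d t) (hx : R.seg d t (i + 1) ∈ switched s s' c) :
    R.seg d t i ∈ switched s s' c := by
  obtain ⟨j, hj, hjs⟩ := h.exists_supporter hx.1
  obtain rfl := (R.adj_seg hi).1 hj
  refine ⟨fun heq => hx.1 ?_, hjs.trans hx.2⟩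
  rw [← hjs, ← heq]
  exact hs d t i hi (by rw [heq, hjs]; exact h.1 _)

theorem switched_seg_of_le (hs : R.Settled C s) (h : Improves adj C s s') (hii' : i' ≤ i)
    (hi : i < R.len d t) (hx : R.seg d t i ∈ switched s s' c) :
    R.seg d t i' ∈ switched s s' c := by
  induction i with
  | zero => rwa [Nat.le_zero.1 hii']
  | succ i ih =>
    rcases hii'.eq_or_lt with rfl | hlt
    · exact hx
    · exact ih (by omega) (by omega) (switched_seg_of_succ hs h hi hx)

theorem switched_hub_of_seg (hs : R.Settled C s) (h : Improves adj C s s')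
    (hi : i < R.len d t) (hx : R.seg d t i ∈ switched s s' c) : R.hub t ∈ switched s s' c :=
  R.seg_zero d t ▸ switched_seg_of_le hs h (Nat.zero_le i) hi hx

theorem switched_hub_of_pred (hs : R.Settled C s) (h : Improves adj C s s')
    (hx : R.pred d t ∈ switched s s' c) : R.hub (d.src t) ∈ switched s s' c :=
  switched_hub_of_seg hs h (Nat.sub_lt (R.len_pos _ _) one_pos) hx

theorem mem_relays_of_switched_pred (hs : R.Settled C s) (h : Improves adj C s s')
    (hx : R.pred d t ∈ switched s s' c) : c ∈ (R.hubSystem C).relays d t := by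
  intro i hi
  have := switched_seg_of_le hs h (i' := i + 1) (by omega)
    (Nat.sub_lt (R.len_pos _ _) one_pos) hx
  exact this.2 ▸ h.1 _

theorem exists_push_of_improves (hs : R.Settled C s) (hv : Valid C s) (h : Improves adj C s s')
    {Y : Set (ZMod m)} (hne : Y.Nonempty) (hY : ∀ t ∈ Y, R.hub t ∈ switched s s' c)
    (hclosed : ∀ t ∈ Y, ∀ d : Dir, R.pred d t ∈ switched s s' c → d.src t ∈ Y) :
    ∃ s₁, ReachWithin (Improves adj C) (n + 1) s s₁ ∧ R.Settled C s₁ ∧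
      R.hubState s₁ = (R.hubSystem C).push (R.hubState s) Y c ∧
      ∀ d t, d.src t ∈ Y → R.pred d t ∈ switched s s' c →
        ∀ i < R.len d (d.src t), s₁ (R.seg d (d.src t) i) = c := by
  obtain ⟨K, hK⟩ : ∃ K : Set V, ∀ x, x ∈ K ↔
      x ∈ switched s s' c ∧ ∃ d t i, t ∈ Y ∧ i < R.len d t ∧ x = R.seg d t i :=
    ⟨{x | _}, fun _ => Iff.rfl⟩
  have hKseg : ∀ {d t i}, i < R.len d t → (R.seg d t i ∈ K ↔
      R.seg d t i ∈ switched s s' c ∧ t ∈ Y) := by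
    refine fun {d t i} hi => (hK _).trans ⟨?_, fun hx => ⟨hx.1, d, t, i, hx.2, hi, rfl⟩⟩
    rintro ⟨hx, d', t', i', ht', hi', heq⟩
    exact ⟨hx, (R.seg_inj hi hi' heq).1 ▸ ht'⟩
  have hKhub : ∀ t, R.hub t ∈ K ↔ t ∈ Y := fun t => by
    rw [← R.seg_zero .fwd, hKseg (R.len_pos _ _), R.seg_zero]
    exact and_iff_right_of_imp (hY t)
  have hdev : Improves adj C s (K.piecewise (fun _ => c) s) := by
    refine ProfDev.restrict (fun _ _ => zero_le_one) h hv ?_ (fun x hx => ((hK x).1 hx).1) ?_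
    · exact hne.elim fun t ht => ⟨_, (hKhub t).2 ht⟩
    · intro x hx j hj hjs hjc
      obtain ⟨-, d, t, i, ht, hi, rfl⟩ := (hK x).1 hx
      cases i with
      | zero =>
        rw [R.seg_zero] at hj
        obtain ⟨d', rfl⟩ := R.adj_hub.1 hj
        exact (hK _).2 ⟨⟨hjs, hjc⟩, d', _, _, hclosed t ht d' ⟨hjs, hjc⟩,
          Nat.sub_lt (R.len_pos _ _) one_pos, rfl⟩
      | succ i =>
        obtain rfl := (R.adj_seg hi).1 hj
        exact (hK _).2 ⟨⟨hjs, hjc⟩, d, t, i, ht, by omega, rfl⟩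
  obtain ⟨s₁, hreach, hs₁, hpush, hfull⟩ := R.exists_spread hs hdev.1 hKhub fun d t i hi hx => by
    rw [hKseg hi] at hx
    exact (hKseg (by omega)).2 ⟨switched_seg_of_succ hs h hi hx.1, hx.2⟩
  exact ⟨s₁, .head hdev hreach, hs₁, hpush, fun d t ht hx =>
    hfull d t ((hKseg (Nat.sub_lt (R.len_pos _ _) one_pos)).2 ⟨hx, ht⟩)⟩

theorem agree_of_supported_hub (h : Improves adj C s s') (ht : s (R.hub t) ≠ s' (R.hub t))
    (hsupp : s (R.hub t) = s (R.pred d t)) (d' : Dir) : s' (R.pred d' t) = s' (R.hub t) :=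
  h.agree_of_supported ht (R.ncard_adj_hub_le t) ⟨_, adj_hub_pred d t, hsupp.symm⟩
    (adj_hub_pred d' t)

theorem exists_switched_pred (h : Improves adj C s s')
    (hstab : (R.hubSystem C).Stable (R.hubState s) t) (ht : R.hub t ∈ switched s s' c) :
    ∃ d, R.pred d t ∈ switched s s' c := by
  by_contra! hnone
  have hkeep : ∀ d, s' (R.pred d t) = c → s (R.pred d t) = c :=
    fun d hd => of_not_not fun hne => hnone d ⟨fun heq => hne (heq.trans hd), hd⟩
  rcases hstab with ⟨d, hd⟩ | hblocked
  · refine ht.1 (Eq.trans hd ?_)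
    rw [ht.2]
    exact hkeep d ((agree_of_supported_hub h ht.1 hd d).trans ht.2)
  · obtain ⟨j, hj, hjs⟩ := h.exists_supporter ht.1
    obtain ⟨d, rfl⟩ := R.adj_hub.1 hj
    refine hblocked d ?_
    change s (R.pred d t) ∈ C (R.hub t)
    rw [hkeep d (hjs.trans ht.2), ← ht.2]
    exact h.1 _

/-- All nodes of the cycle through the hubs `t - 1` and `t` have the same colour. -/
def Mono (R : CycleRing adj m n) (s : V → M) (t : ZMod m) : Prop :=
  (∀ i < R.len .fwd (t - 1), s (R.seg .fwd (t - 1) i) = s (R.hub t)) ∧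
    ∀ i < R.len .bwd t, s (R.seg .bwd t i) = s (R.hub t)

theorem seg_succ_eq_of_agree (h : Improves adj C s s') (hi : i + 1 < R.len d t)
    (hagree : s (R.seg d t i) = s (R.seg d t (i + 1))) :
    s (R.seg d t (i + 1)) = s' (R.seg d t (i + 1)) := by
  by_contra hne
  obtain ⟨j, hj, hjs⟩ := h.exists_dissenter hne
  obtain rfl := (R.adj_seg hi).1 hj
  exact hjs hagree

/-- If a hub switches away from the colour of the segment entering it, so does the last node of that
segment, which must therefore be a hub. -/
theorem len_eq_one_of_switch (h : Improves adj C s s')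
    (hseg : ∀ i < R.len d (d.src t), s (R.seg d (d.src t) i) = s (R.hub t))
    (ht : s (R.hub t) ≠ s' (R.hub t)) :
    R.len d (d.src t) = 1 ∧ s (R.hub (d.src t)) ≠ s' (R.hub (d.src t)) := by
  have hpos := R.len_pos d (d.src t)
  have hpred : s (R.pred d t) = s (R.hub t) := hseg _ (Nat.sub_lt hpos one_pos)
  have hne : s (R.pred d t) ≠ s' (R.pred d t) := by
    rwa [agree_of_supported_hub h ht hpred.symm d, hpred]
  obtain ⟨l, hl⟩ := Nat.exists_eq_add_of_le' hpos
  cases l with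
  | zero =>
    rw [pred, hl, R.seg_zero] at hne
    exact ⟨hl, hne⟩
  | succ l =>
    rw [pred, hl] at hne
    refine absurd (seg_succ_eq_of_agree h (hl ▸ by omega) ?_) hne
    rw [hseg _ (by omega), hseg _ (by omega)]

theorem Mono.seg_eq (hs : R.Mono s t) (h : Improves adj C s s') :
    (∀ i < R.len .fwd (t - 1), s (R.seg .fwd (t - 1) i) = s' (R.seg .fwd (t - 1) i)) ∧
      ∀ i < R.len .bwd t, s (R.seg .bwd t i) = s' (R.seg .bwd t i) := by
  have hhub : s (R.hub (t - 1)) = s (R.hub t) := R.seg_zero .fwd _ ▸ hs.1 0 (R.len_pos _ _)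
  have hsrc : Dir.bwd.src (t - 1) = t := sub_add_cancel t 1
  have hfwd := len_eq_one_of_switch (d := .fwd) (t := t) h hs.1
  have hbwd := len_eq_one_of_switch (d := .bwd) (t := t - 1) h (by rw [hsrc, hhub]; exact hs.2)
  rw [hsrc] at hbwd
  have hthree := R.three_le t
  have h₀ : s (R.hub t) = s' (R.hub t) := by
    by_contra hne
    have h₁ := hfwd hne
    have h₂ := hbwd h₁.2
    simp only [Dir.src] at h₁
    omega
  have h₁ : s (R.hub (t - 1)) = s' (R.hub (t - 1)) := of_not_not fun hne => (hbwd hne).2 h₀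
  refine ⟨fun i hi => ?_, fun i hi => ?_⟩
  · rcases i with - | i
    · rwa [R.seg_zero]
    · exact seg_succ_eq_of_agree h hi (by rw [hs.1 _ hi, hs.1 i (by omega)])
  · rcases i with - | i
    · rwa [R.seg_zero]
    · exact seg_succ_eq_of_agree h hi (by rw [hs.2 _ hi, hs.2 i (by omega)])

theorem Mono.hub_eq (hs : R.Mono s t) (h : Improves adj C s s') : s (R.hub t) = s' (R.hub t) :=
  R.seg_zero .bwd t ▸ (hs.seg_eq h).2 0 (R.len_pos _ _)

theorem Mono.improves (hs : R.Mono s t) (h : Improves adj C s s') : R.Mono s' t := by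
  have hseg := hs.seg_eq h
  rw [Mono, ← hs.hub_eq h]
  exact ⟨fun i hi => (hseg.1 i hi).symm.trans (hs.1 i hi),
    fun i hi => (hseg.2 i hi).symm.trans (hs.2 i hi)⟩

theorem Mono.reachWithin (hs : R.Mono s t) (h : ReachWithin (Improves adj C) k s s') :
    R.Mono s' t :=
  h.preserves (p := (R.Mono · t)) (fun _ _ h h' => h'.improves h) hs

/-- A settled joint strategy all of whose hubs are stable. -/
structure Quiet (R : CycleRing adj m n) (C : V → Finset M) (s : V → M) : Prop where
  valid : Valid C s
  settled : R.Settled C s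
  stable : ∀ t, (R.hubSystem C).Stable (R.hubState s) t

/-- Every hub agrees with one of its in-neighbours. -/
def Supported (R : CycleRing adj m n) (s : V → M) : Prop := ∀ t, ∃ d, s (R.hub t) = s (R.pred d t)

theorem exists_switched_hub (hs : R.Settled C s) (h : Improves adj C s s') :
    ∃ c t, R.hub t ∈ switched s s' c := by
  obtain ⟨x, hx⟩ := Function.ne_iff.1 h.2.1
  obtain ⟨d, t, i, hi, rfl⟩ := R.exists_seg x
  exact ⟨_, t, switched_hub_of_seg hs h hi ⟨hx, rfl⟩⟩

theorem isStrong_of_hub_eq (hv : Valid C s) (hs : R.Settled C s)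
    (hc : ∀ d t, s (R.pred d t) = s (R.hub t)) :
    IsStrong adj (fun _ _ => 1) (fun _ _ => 0) C s := by
  refine ⟨hv, fun s' h => ?_⟩
  obtain ⟨c, t, ht⟩ := exists_switched_hub hs h
  obtain ⟨j, hj, hjs⟩ := Improves.exists_dissenter h ht.1
  obtain ⟨d, rfl⟩ := R.adj_hub.1 hj
  exact hjs (hc d t)

theorem Quiet.exists_push_univ (hs : R.Quiet C s) (h : Improves adj C s s')
    (hall : ∀ t, R.hub t ∈ switched s s' c) :
    ∃ s₁, ReachWithin (Improves adj C) (n + 1) s s₁ ∧ R.Quiet C s₁ ∧ R.Supported s₁ ∧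
      (R.Supported s → IsStrong adj (fun _ _ => 1) (fun _ _ => 0) C s₁) := by
  obtain ⟨s₁, hreach, hs₁, hpush, -⟩ := exists_push_of_improves hs.settled hs.valid h
    Set.univ_nonempty (fun t _ => hall t) fun _ _ _ _ => Set.mem_univ _
  have hhub : ∀ t, s₁ (R.hub t) = c := fun t =>
    (congrArg (·.colour t) hpush).trans (HubSystem.push_colour_mem (Set.mem_univ t))
  have hpred : ∀ d t, s₁ (R.pred d t) =
      if c ∈ (R.hubSystem C).relays d t then c else s (R.pred d t) := fun d t => by
    simpa [HubSystem.push, hubState] using congrArg (·.input d t) hpush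
  have hswitch : ∀ d t, R.pred d t ∈ switched s s' c → s₁ (R.pred d t) = c := fun d t hx =>
    (hpred d t).trans (if_pos (mem_relays_of_switched_pred hs.settled h hx))
  have hsupp : R.Supported s₁ := fun t => by
    obtain ⟨d, hd⟩ := exists_switched_pred h (hs.stable t) (hall t)
    exact ⟨d, (hhub t).trans (hswitch d t hd).symm⟩
  have hv := hreach.valid hs.valid
  refine ⟨s₁, hreach, ⟨hv, hs₁, fun t => .inl (hsupp t)⟩, hsupp, fun hold => ?_⟩
  refine isStrong_of_hub_eq hv hs₁ fun d t => ?_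
  obtain ⟨d', hd'⟩ := hold t
  have hd : s' (R.pred d t) = c :=
    (agree_of_supported_hub h (hall t).1 hd' d).trans (hall t).2
  rw [hhub]
  by_cases hx : s (R.pred d t) = c
  · rw [hpred, hx, ite_self]
  · exact hswitch d t ⟨fun heq => hx (heq.trans hd), hd⟩

theorem Quiet.exists_mono (hs : R.Quiet C s) (h : Improves adj C s s')
    (ht : R.hub t ∈ switched s s' c) (ht' : R.hub t' ∉ switched s s' c) :
    ∃ s₁, ReachWithin (Improves adj C) ((2 * m ^ 2 + 1) * (n + 1)) s s₁ ∧ R.Quiet C s₁ ∧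
      ∃ u, ¬R.Mono s u ∧ R.Mono s₁ u := by
  have hm := R.two_le
  obtain ⟨a, e, he, hem, hsub, hfirst, hlast⟩ := exists_arc_compl_subset
    (S := {t | R.hub t ∈ switched s s' c}) (by omega) ⟨t, ht⟩ ⟨t', ht'⟩
  have hclosed : ∀ t ∉ arc a e, ∀ d, R.pred d t ∈ switched s s' c → d.src t ∉ arc a e := by
    intro t ht d hx hsrc
    have hmem := switched_hub_of_pred hs.settled h hx
    rcases src_eq_of_src_mem_arc hem ht hsrc with heq | heq
    · exact hfirst (heq ▸ hmem)
    · exact hlast (heq ▸ hmem)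
  have hex : ∀ t ∉ arc a e, ∃ d, R.pred d t ∈ switched s s' c := fun t ht =>
    exists_switched_pred h (hs.stable t) (hsub ht)
  obtain ⟨s₁, hreach₁, hs₁, hpush, hfull⟩ := exists_push_of_improves hs.settled hs.valid h
    (arc_compl_nonempty hem) (fun t ht => hsub ht) hclosed
  obtain ⟨Z, hZ, hstab⟩ := HubSystem.exists_stable_of_push_compl hem hs.stable fun t ht => by
    obtain ⟨d, hd⟩ := hex t ht
    exact ⟨d, hclosed t ht d hd, mem_relays_of_switched_pred hs.settled h hd⟩
  obtain ⟨s₂, hreach₂, hs₂, rfl⟩ := exists_reach hs₁ (hreach₁.valid hs.valid) (hpush ▸ hZ)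
  have hreach := hreach₁.trans hreach₂
  refine ⟨s₂, hreach.of_le (by linarith), ⟨hreach.valid hs.valid, hs₂, hstab⟩, ?_⟩
  obtain ⟨u, hprev, hu, hfwd, hbwd⟩ := exists_mutual
    (p := fun d t => R.pred d t ∈ switched s s' c) he hem hex hclosed
  have hsrc : Dir.bwd.src (u - 1) = u := sub_add_cancel u 1
  have hseg_fwd := hfull .fwd u hprev hfwd
  have hseg_bwd := hfull .bwd (u - 1) (by rwa [hsrc]) hbwd
  rw [hsrc] at hseg_bwd
  have hhub : s₁ (R.hub u) = c := R.seg_zero .bwd u ▸ hseg_bwd 0 (R.len_pos _ _)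
  have hmono : R.Mono s₁ u := ⟨fun i hi => (hseg_fwd i hi).trans hhub.symm,
    fun i hi => (hseg_bwd i hi).trans hhub.symm⟩
  exact ⟨u, fun hold => (hsub hu).1 (hold.hub_eq h), hmono.reachWithin hreach₂⟩

/-- The potential of a quiet strategy: a coalition deviation, followed by restabilisation of the
hubs, either makes a further cycle monochromatic, possibly at the expense of the support of a hub,
or makes every hub supported. -/
noncomputable def potential (R : CycleRing adj m n) (s : V → M) : ℕ :=
  2 * {t | ¬R.Mono s t}.ncard + if R.Supported s then 0 else 1

theorem ncard_not_mono_le (R : CycleRing adj m n) (h : ReachWithin (Improves adj C) k s s') :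
    {t | ¬R.Mono s' t}.ncard ≤ {t | ¬R.Mono s t}.ncard := by
  have : NeZero m := ⟨(two_pos.trans_le R.two_le).ne'⟩
  exact Set.ncard_le_ncard fun t => mt (Mono.reachWithin · h)

theorem ncard_not_mono_lt (h : ReachWithin (Improves adj C) k s s') (ht : ¬R.Mono s t)
    (ht' : R.Mono s' t) : {t | ¬R.Mono s' t}.ncard < {t | ¬R.Mono s t}.ncard := by
  have : NeZero m := ⟨(two_pos.trans_le R.two_le).ne'⟩
  exact Set.ncard_lt_ncard ⟨fun t => mt (Mono.reachWithin · h), fun hsub => hsub ht ht'⟩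

theorem Quiet.exists_potential_lt (hs : R.Quiet C s) (h : Improves adj C s s') :
    ∃ s₁, ReachWithin (Improves adj C) ((2 * m ^ 2 + 1) * (n + 1)) s s₁ ∧ R.Quiet C s₁ ∧
      (IsStrong adj (fun _ _ => 1) (fun _ _ => 0) C s₁ ∨ R.potential s₁ < R.potential s) := by
  obtain ⟨c, t, ht⟩ := exists_switched_hub hs.settled h
  by_cases hall : ∀ t, R.hub t ∈ switched s s' c
  · obtain ⟨s₁, hreach, hs₁, hsupp, hstrong⟩ := hs.exists_push_univ h hall
    refine ⟨s₁, hreach.of_le (Nat.le_mul_of_pos_left _ (by omega)), hs₁, ?_⟩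
    refine (em (R.Supported s)).imp hstrong fun hold => ?_
    rw [potential, potential, if_pos hsupp, if_neg hold]
    linarith [R.ncard_not_mono_le hreach]
  · obtain ⟨t', ht'⟩ := not_forall.1 hall
    obtain ⟨s₁, hreach, hs₁, u, hu, hu'⟩ := hs.exists_mono h ht ht'
    refine ⟨s₁, hreach, hs₁, .inr ?_⟩
    have := ncard_not_mono_lt hreach hu hu'
    rw [potential, potential]
    split_ifs <;> omega

theorem Quiet.exists_isStrong (hs : R.Quiet C s) :
    ∃ s₁, ReachWithin (Improves adj C) ((R.potential s + 1) * ((2 * m ^ 2 + 1) * (n + 1))) s s₁ ∧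
      IsStrong adj (fun _ _ => 1) (fun _ _ => 0) C s₁ := by
  induction hp : R.potential s using Nat.strong_induction_on generalizing s with
  | _ p ih =>
    by_cases hstrong : IsStrong adj (fun _ _ => 1) (fun _ _ => 0) C s
    · exact ⟨s, .refl _ _, hstrong⟩
    obtain ⟨s', h⟩ : ∃ s', Improves adj C s s' := by
      by_contra! hnone
      exact hstrong ⟨hs.valid, hnone⟩
    obtain ⟨s₁, hreach, hs₁, hdone | hlt⟩ := hs.exists_potential_lt h
    · exact ⟨s₁, hreach.of_le (Nat.le_mul_of_pos_left _ p.succ_pos), hdone⟩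
    · obtain ⟨s₂, hreach₂, hdone⟩ := ih _ (hp ▸ hlt) hs₁ rfl
      refine ⟨s₂, (hreach.trans hreach₂).of_le ?_, hdone⟩
      rw [← one_add_mul]
      exact Nat.mul_le_mul_right _ (by omega)

theorem exists_isStrong (R : CycleRing adj m n) (hn : 1 ≤ n) (hs : Valid C s) :
    ∃ s', ReachWithin (Improves adj C) (33 * n * m ^ 3) s s' ∧
      IsStrong adj (fun _ _ => 1) (fun _ _ => 0) C s' := by
  have hm := R.two_le
  obtain ⟨s₁, hreach₁, -, hrec⟩ := R.exists_settle hs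
  have hv₁ := hreach₁.valid hs
  have hs₁ : R.Settled C s₁ := fun d t i hi h => (hrec d t i hi).trans (if_pos h)
  obtain ⟨Z, hZ, hstab⟩ := HubSystem.stabilizesWithin (G := R.hubSystem C) (X := R.hubState s₁) hm
    fun t => hv₁ (R.hub t)
  obtain ⟨s₂, hreach₂, hs₂, rfl⟩ := exists_reach hs₁ hv₁ hZ
  have hquiet : R.Quiet C s₂ := ⟨hreach₂.valid hv₁, hs₂, hstab⟩
  obtain ⟨s₃, hreach₃, hdone⟩ := hquiet.exists_isStrong
  refine ⟨s₃, ((hreach₁.trans hreach₂).trans hreach₃).of_le ?_, hdone⟩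
  have hpot : R.potential s₂ + 1 ≤ 3 * m := by
    have := ncard_zmod_le (m := m) (by omega) {t | ¬R.Mono s₂ t}
    rw [potential]
    split_ifs <;> omega
  calc n + 7 * m ^ 3 * (n + 1) + (R.potential s₂ + 1) * ((2 * m ^ 2 + 1) * (n + 1))
      ≤ n * m ^ 3 + 7 * m ^ 3 * (2 * n) + 3 * m * (3 * m ^ 2 * (2 * n)) := by
        gcongr
        · exact Nat.le_mul_of_pos_right _ (by positivity)
        · omega
        · linarith [Nat.one_le_pow 2 m (by omega)]
        · omega
    _ = 33 * n * m ^ 3 := by ring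

end Game

end CycleRing

theorem zmod_eq_add_one_iff {m : ℕ} (hm : 2 ≤ m) {t t' : ZMod m} :
    t' = t + 1 ↔ t'.val = t.val + 1 ∨ t.val = m - 1 ∧ t'.val = 0 := by
  have : NeZero m := ⟨by omega⟩
  have ht := ZMod.val_lt t
  have ht' := ZMod.val_lt t'
  rw [← (ZMod.val_injective m).eq_iff, ZMod.val_add, ZMod.val_one_eq_one_mod, Nat.add_mod_mod]
  rcases (Nat.succ_le_iff.2 ht).lt_or_eq with hlt | heq
  · rw [Nat.mod_eq_of_lt hlt]
    omega
  · rw [← Nat.succ_eq_add_one, heq, Nat.mod_self]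
    omega

namespace IsClosedChain

variable {V : Type} {m n i i' : ℕ} {node : ℕ → ℕ → V} {k : ℕ → ℕ} {t t' : ZMod m}
  {u : V}

theorem neZero (h : IsClosedChain m n node k) : NeZero m := ⟨(two_pos.trans_le h.1).ne'⟩

theorem k_pos (h : IsClosedChain m n node k) (t : ZMod m) : 1 ≤ k t.val :=
  have := h.neZero
  (h.2.2.1 _ (ZMod.val_lt t)).1

theorem k_lt (h : IsClosedChain m n node k) (t : ZMod m) : k t.val < n :=
  have := h.neZero
  (h.2.2.1 _ (ZMod.val_lt t)).2

theorem node_k (h : IsClosedChain m n node k) (t : ZMod m) :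
    node (t + 1).val (k t.val) = node t.val 0 := by
  obtain ⟨hm, -, -, hnext, hlast, -⟩ := h
  have : NeZero m := ⟨by omega⟩
  rcases (zmod_eq_add_one_iff hm).1 (rfl : t + 1 = _) with heq | ⟨heq, hzero⟩
  · rw [heq, hnext _ (heq ▸ ZMod.val_lt (t + 1))]
  · rw [hzero, heq, hlast]

theorem node_eq (h : IsClosedChain m n node k) (hi : i < n) (hi' : i' < n)
    (heq : node t.val i = node t'.val i') :
    t = t' ∧ i = i' ∨ t' = t + 1 ∧ i = 0 ∧ i' = k t.val ∨ t = t' + 1 ∧ i' = 0 ∧ i = k t'.val := by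
  obtain ⟨hm, -, -, -, -, hinj, -⟩ := h
  have : NeZero m := ⟨by omega⟩
  rw [← (ZMod.val_injective m).eq_iff, zmod_eq_add_one_iff hm, zmod_eq_add_one_iff hm]
  rcases hinj _ _ _ _ (ZMod.val_lt t) hi (ZMod.val_lt t') hi' heq with h | h | h | h | h
  · exact .inl h
  · exact .inr (.inl ⟨.inl h.1, h.2⟩)
  · exact .inr (.inr ⟨.inl h.1, h.2⟩)
  · exact .inr (.inl ⟨.inr ⟨h.1, h.2.1⟩, h.2.2.1, h.1 ▸ h.2.2.2⟩)
  · exact .inr (.inr ⟨.inr ⟨h.1, h.2.1⟩, h.2.2.1, h.1 ▸ h.2.2.2⟩)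

theorem exists_node (h : IsClosedChain m n node k) (v : V) :
    ∃ t : ZMod m, ∃ i < n, node t.val i = v := by
  obtain ⟨j, i, hj, hi, hv⟩ := h.2.2.2.2.2.2 v
  exact ⟨j, i, hi, by rwa [ZMod.val_natCast, Nat.mod_eq_of_lt hj]⟩

theorem adj_iff (h : IsClosedChain m n node k) {v : V} :
    chainAdj m n node u v ↔ ∃ t : ZMod m, u = node t.val (n - 1) ∧ v = node t.val 0 ∨
      ∃ i, i + 1 < n ∧ u = node t.val i ∧ v = node t.val (i + 1) := by
  have := h.neZero
  have hn := h.2.1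
  constructor
  · rintro ⟨j, i, hj, hi, rfl, rfl⟩
    refine ⟨j, ?_⟩
    rw [ZMod.val_natCast, Nat.mod_eq_of_lt hj]
    rcases (Nat.succ_le_iff.2 hi).lt_or_eq with hlt | rfl
    · exact .inr ⟨i, hlt, rfl, by rw [Nat.mod_eq_of_lt hlt]⟩
    · exact .inl ⟨rfl, by rw [Nat.mod_self]⟩
  · rintro ⟨t, ⟨rfl, rfl⟩ | ⟨i, hi, rfl, rfl⟩⟩
    · exact ⟨_, n - 1, ZMod.val_lt t, by omega, rfl, by rw [Nat.sub_add_cancel (by omega),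
        Nat.mod_self]⟩
    · exact ⟨_, i, ZMod.val_lt t, by omega, rfl, by rw [Nat.mod_eq_of_lt hi]⟩

theorem adj_node_succ (h : IsClosedChain m n node k) (hi : i + 1 < n)
    (hk : ∀ t', t = t' + 1 → i + 1 ≠ k t'.val) :
    chainAdj m n node u (node t.val (i + 1)) ↔ u = node t.val i := by
  rw [h.adj_iff]
  refine ⟨?_, fun hu => ⟨t, .inr ⟨i, hi, hu, rfl⟩⟩⟩
  rintro ⟨t', ⟨-, heq⟩ | ⟨i', hi', rfl, heq⟩⟩
  · rcases h.node_eq hi (by omega) heq with h | h | h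
    · omega
    · omega
    · exact absurd h.2.2 (hk _ h.1)
  · rcases h.node_eq hi hi' heq with ⟨rfl, h⟩ | h | h
    · rw [Nat.succ.inj h]
    · omega
    · omega

theorem adj_node_zero (h : IsClosedChain m n node k) :
    chainAdj m n node u (node t.val 0) ↔
      u = node t.val (n - 1) ∨ u = node (t + 1).val (k t.val - 1) := by
  have hn := h.2.1
  have hpos := h.k_pos t
  have hlt := h.k_lt t
  rw [h.adj_iff]
  constructor
  · rintro ⟨t', ⟨rfl, heq⟩ | ⟨i', hi', rfl, heq⟩⟩
    · rcases h.node_eq (by omega) (by omega) heq with ⟨rfl, -⟩ | hb | hb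
      · exact .inl rfl
      · have := h.k_pos t
        omega
      · have := h.k_pos t'
        omega
    · rcases h.node_eq (by omega) hi' heq with hb | ⟨rfl, -, hb⟩ | hb
      · omega
      · exact .inr (by rw [← hb, Nat.add_sub_cancel])
      · omega
  · rintro (rfl | rfl)
    · exact ⟨t, .inl ⟨rfl, rfl⟩⟩
    · exact ⟨t + 1, .inr ⟨k t.val - 1, by omega, rfl,
        by rw [Nat.sub_add_cancel hpos, h.node_k]⟩⟩

theorem node_fwd_inj (h : IsClosedChain m n node k) (hi : i < n - k t.val)
    (hi' : i' < n - k t'.val)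
    (heq : node (t + 1).val (k t.val + i) = node (t' + 1).val (k t'.val + i')) :
    t = t' ∧ i = i' := by
  have hpos := h.k_pos t
  have hpos' := h.k_pos t'
  rcases h.node_eq (by omega) (by omega) heq with ⟨ht, hii⟩ | hb | hb
  · obtain rfl := add_right_cancel ht
    exact ⟨rfl, Nat.add_left_cancel hii⟩
  · omega
  · omega

theorem node_bwd_inj (h : IsClosedChain m n node k) (hi : i < k (t - 1).val)
    (hi' : i' < k (t' - 1).val) (heq : node t.val i = node t'.val i') : t = t' ∧ i = i' := by
  have hlt := h.k_lt (t - 1)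
  have hlt' := h.k_lt (t' - 1)
  rcases h.node_eq (by omega) (by omega) heq with hb | ⟨rfl, -, rfl⟩ | ⟨rfl, -, rfl⟩
  · exact hb
  · simp only [add_sub_cancel_right, lt_irrefl] at hi'
  · simp only [add_sub_cancel_right, lt_irrefl] at hi

theorem eq_zero_of_node_fwd_eq_node_bwd (h : IsClosedChain m n node k) (hi : i < n - k t.val)
    (hi' : i' < k (t' - 1).val) (heq : node (t + 1).val (k t.val + i) = node t'.val i') :
    t = t' ∧ i = 0 ∧ i' = 0 := by
  have hpos := h.k_pos t
  have hlt := h.k_lt (t' - 1)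
  rcases h.node_eq (by omega) (by omega) heq with ⟨rfl, rfl⟩ | hb | ⟨ht, hi₀, hii⟩
  · simp only [add_sub_cancel_right] at hi'
    omega
  · omega
  · obtain rfl := add_right_cancel ht
    exact ⟨rfl, by omega, hi₀⟩

/-- The nodes `1 ^ j` become the hubs. The cycle `C_(j+1)` is cut at its hubs `1 ^ (j+1)` and
`k ^ (j+1) = 1 ^ j` into a backward segment, from the former to the latter, and a forward one. -/
def cycleRing (h : IsClosedChain m n node k) : CycleRing (chainAdj m n node) m n where
  hub t := node t.val 0
  seg
    | .fwd, t, i => node (t + 1).val (k t.val + i)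
    | .bwd, t, i => node t.val i
  len
    | .fwd, t => n - k t.val
    | .bwd, t => k (t - 1).val
  two_le := h.1
  len_pos := Dir.forall_iff.2 ⟨fun t => Nat.sub_pos_of_lt (h.k_lt t), fun t => h.k_pos _⟩
  len_le := Dir.forall_iff.2 ⟨fun t => Nat.sub_le _ _, fun t => (h.k_lt _).le⟩
  three_le t := (Nat.sub_add_cancel (h.k_lt (t - 1)).le).symm ▸ h.2.1
  seg_zero := Dir.forall_iff.2 ⟨h.node_k, fun _ => rfl⟩
  seg_inj {d d' t t' i i'} hi hi' heq := by
    cases d <;> cases d'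
    · exact (h.node_fwd_inj hi hi' heq).imp_right fun hii => ⟨hii, .inr rfl⟩
    · obtain ⟨ht, rfl, rfl⟩ := h.eq_zero_of_node_fwd_eq_node_bwd hi hi' heq
      exact ⟨ht, rfl, .inl rfl⟩
    · obtain ⟨ht, rfl, rfl⟩ := h.eq_zero_of_node_fwd_eq_node_bwd hi' hi heq.symm
      exact ⟨ht.symm, rfl, .inl rfl⟩
    · exact (h.node_bwd_inj hi hi' heq).imp_right fun hii => ⟨hii, .inr rfl⟩
  exists_seg v := by
    obtain ⟨t, i, hi, rfl⟩ := h.exists_node v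
    rcases lt_or_ge i (k (t - 1).val) with hlt | hle
    · exact ⟨.bwd, t, i, hlt, rfl⟩
    · exact ⟨.fwd, t - 1, i - k (t - 1).val, Nat.sub_lt_sub_right hle hi,
        by simp only [sub_add_cancel, Nat.add_sub_cancel' hle]⟩
  adj_seg {d t i u} hi := by
    cases d with
    | fwd =>
      replace hi : i + 1 < n - k t.val := hi
      refine h.adj_node_succ (i := k t.val + i) (by omega) fun t' ht => ?_
      rw [← add_right_cancel ht]
      omega
    | bwd =>
      replace hi : i + 1 < k (t - 1).val := hi
      refine h.adj_node_succ (hi.trans (h.k_lt _)) fun t' ht => ?_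
      rw [ht, add_sub_cancel_right] at hi
      exact hi.ne
  adj_hub {t u} := by
    have hlen : k (t - 1).val + (n - k (t - 1).val - 1) = n - 1 := by
      have := h.k_lt (t - 1)
      omega
    simp only [h.adj_node_zero, Dir.exists_iff, Dir.src, sub_add_cancel, add_sub_cancel_right, hlen]

end IsClosedChain

section Conclusion

variable {V M : Type} [Fintype V] {C : V → Finset M} {s s' : V → M}

theorem ReachWithin.exists_cImpPath {adj : V → V → Prop} {k : ℕ}
    (h : ReachWithin (Improves adj C) k s s')
    (hs' : IsStrong adj (fun _ _ => 1) (fun _ _ => 0) C s') :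
    ∃ L ≤ k, CImpPath adj (fun _ _ => 1) (fun _ _ => 0) C s L := by
  induction h with
  | refl k s => exact ⟨0, k.zero_le, fun _ => s, rfl, fun t ht => absurd ht t.not_lt_zero, hs'⟩
  | @head k s _ _ hstep _ ih =>
    obtain ⟨L, hL, σ, rfl, hσ, hend⟩ := ih hs'
    let τ : ℕ → V → M
      | 0 => s
      | t + 1 => σ t
    refine ⟨L + 1, Nat.succ_le_succ hL, τ, rfl, ?_, hend⟩
    rintro (_ | t) ht
    · exact hstep
    · exact hσ t (Nat.lt_of_succ_lt_succ ht)

theorem closed_chain_cimprovement_path_general {m n : ℕ} {node : ℕ → ℕ → V} {k : ℕ → ℕ}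
    (h : IsClosedChain m n node k) (hs : Valid C s) :
    ∃ L ≤ 33 * n * m ^ 3, CImpPath (chainAdj m n node) (fun _ _ => 1) (fun _ _ => 0) C s L := by
  obtain ⟨_, hreach, hstrong⟩ := h.cycleRing.exists_isStrong (Nat.one_le_of_lt h.2.1) hs
  exact hreach.exists_cImpPath hstrong

end Conclusion

/-- There is a constant `c` such that every coordination game without bonuses
on an unweighted closed chain of `m` cycles, each cycle having `n` nodes,
admits, from every joint strategy, a finite c-improvement path of length at
most `c * n * m ^ 3` ending in a strong equilibrium. -/
theorem closed_chain_cimprovement_path :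
    ∃ c : ℕ,
      ∀ (V : Type) [Fintype V] (M : Type) [Fintype M],
      ∀ (m n : ℕ) (node : ℕ → ℕ → V) (k : ℕ → ℕ),
        IsClosedChain m n node k →
      ∀ (C : V → Finset M), (∀ i, (C i).Nonempty) →
      ∀ s : V → M, Valid C s →
        ∃ L, L ≤ c * n * m ^ 3 ∧
          CImpPath (chainAdj m n node) (fun _ _ => 1) (fun _ _ => 0) C s L :=
  ⟨33, fun _ _ _ _ _ _ _ _ h _ _ _ hs => closed_chain_cimprovement_path_general h hs⟩

end CG
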